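/- arXiv:2007.09132 — 4 statements merged into one kernel-verified Lean document; each statement's English description precedes it below -/
import Mathlib

section
/- Let m : J → ℝ be differentiable on J with (^{ABC}D^α m) continuous on J. If there exists τ₀ ∈ (0,T] with m(τ₀) = 0 and m(τ) ≤ 0 for all τ ∈ [0,τ₀), then (^{ABC}D^α m)(τ₀) ≥ 0. -/
/-- One-parameter Mittag-Leffler function `E_α(z) = ∑ zⁿ / Γ(nα+1)`. -/
noncomputable def mlE (α z : ℝ) : ℝ := ∑' n : ℕ, z ^ n / Real.Gamma (n * α + 1)

/-- Atangana–Baleanu–Caputo fractional derivative of order `α` (base point 0),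
with normalization constant `B = B(α)`. -/
noncomputable def abcD (α B : ℝ) (m : ℝ → ℝ) (τ : ℝ) : ℝ :=
  B / (1 - α) * ∫ σ in (0:ℝ)..τ, mlE α (-(α / (1 - α)) * (τ - σ) ^ α) * deriv m σ


open MeasureTheory Filter Topology

/-- two-parameter Mittag-Leffler -/
noncomputable def mlG (α β z : ℝ) : ℝ := ∑' n : ℕ, z ^ n / Real.Gamma (n * α + β)

lemma beta_scaled_real {p q t : ℝ} (hp : 0 < p) (hq : 0 < q) (ht : 0 < t) :
    ∫ s in (0:ℝ)..t, s ^ (p - 1) * (t - s) ^ (q - 1)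
      = t ^ (p + q - 1) * (Real.Gamma p * Real.Gamma q / Real.Gamma (p + q)) := by
  have h := Complex.betaIntegral_scaled (p : ℂ) (q : ℂ) ht
  rw [Complex.betaIntegral_eq_Gamma_mul_div _ _ (by simpa) (by simpa)] at h
  have h2 : ∫ x in (0:ℝ)..t, (x : ℂ) ^ ((p:ℂ) - 1) * ((t : ℂ) - x) ^ ((q:ℂ) - 1)
      = ∫ x in (0:ℝ)..t, ((x ^ (p - 1) * (t - x) ^ (q - 1) : ℝ) : ℂ) := by
    refine intervalIntegral.integral_congr fun x hx => ?_
    rw [Set.uIcc_of_le ht.le] at hx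
    push_cast
    rw [Complex.ofReal_cpow hx.1, Complex.ofReal_cpow (by linarith [hx.2])]
    push_cast
    rfl
  rw [h2, intervalIntegral.integral_ofReal] at h
  apply Complex.ofReal_injective
  rw [h]
  push_cast
  rw [Complex.ofReal_cpow ht.le, ← Complex.Gamma_ofReal, ← Complex.Gamma_ofReal,
    ← Complex.Gamma_ofReal]
  push_cast
  rfl

lemma beta_scaled_int {p q t : ℝ} (hp : 0 < p) (hq : 0 < q) (ht : 0 < t) :
    IntervalIntegrable (fun s : ℝ => s ^ (p - 1) * (t - s) ^ (q - 1)) volume 0 t := by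
  by_contra h
  have := intervalIntegral.integral_undef h
  rw [beta_scaled_real hp hq ht] at this
  have h1 := Real.Gamma_pos_of_pos hp
  have h2 := Real.Gamma_pos_of_pos hq
  have h3 := Real.Gamma_pos_of_pos (add_pos hp hq)
  have : 0 < t ^ (p + q - 1) * (Real.Gamma p * Real.Gamma q / Real.Gamma (p + q)) := by positivity
  linarith

lemma gamma_growth {α x : ℝ} (hα : 0 < α) (hx : 1 < x) :
    Real.Gamma x * (x - 1) ^ α ≤ Real.Gamma (x + α) := by
  have h := Real.convexOn_log_Gamma.slope_mono_adjacent (x := x - 1) (y := x) (z := x + α)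
    (by simp; linarith) (by simp; linarith) (by linarith) (by linarith)
  have h1 := Real.Gamma_pos_of_pos (show 0 < x by linarith)
  have h2 := Real.Gamma_pos_of_pos (show 0 < x + α by linarith)
  have h3 := Real.Gamma_pos_of_pos (show 0 < x - 1 by linarith)
  have h4 : Real.Gamma x = (x - 1) * Real.Gamma (x - 1) := by
    have := Real.Gamma_add_one (s := x - 1) (by linarith)
    simpa using this
  have h5 : Real.log (Real.Gamma x) - Real.log (Real.Gamma (x - 1)) = Real.log (x - 1) := by
    rw [h4, Real.log_mul (by linarith) h3.ne']; ring
  simp only [Function.comp] at h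
  rw [h5, show x - (x - 1) = 1 by ring, div_one, show x + α - x = α by ring, le_div_iff₀ hα] at h
  have hx1 : 0 < x - 1 := by linarith
  rw [← Real.log_le_log_iff (by positivity) h2, Real.log_mul h1.ne' (by positivity),
    Real.log_rpow hx1]
  linarith

lemma mlG_summable {α β : ℝ} (hα : 0 < α) (hβ : 0 < β) (z : ℝ) :
    Summable fun n : ℕ => z ^ n / Real.Gamma (n * α + β) := by
  have hpos : ∀ n : ℕ, 0 < Real.Gamma (n * α + β) := fun n => Real.Gamma_pos_of_pos (by positivity)
  refine summable_of_ratio_norm_eventually_le (r := 1/2) (by norm_num) ?_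
  have ht : Tendsto (fun n : ℕ => ((n:ℝ) * α + β - 1) ^ α) atTop atTop := by
    refine (tendsto_rpow_atTop hα).comp ?_
    have := (tendsto_natCast_atTop_atTop (R := ℝ)).atTop_mul_const hα
    simpa [add_sub_assoc] using tendsto_atTop_add_const_right _ (β - 1) this
  have ht2 : Tendsto (fun n : ℕ => ((n:ℝ) * α + β)) atTop atTop := by
    have := (tendsto_natCast_atTop_atTop (R := ℝ)).atTop_mul_const hα
    exact tendsto_atTop_add_const_right _ β this
  filter_upwards [ht.eventually_ge_atTop (2 * |z|), ht2.eventually_gt_atTop 1] with n hn hn1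
  have hg := gamma_growth hα hn1
  have e : ((n + 1 : ℕ) : ℝ) * α + β = n * α + β + α := by push_cast; ring
  have h1 := hpos n
  have h2 := hpos (n + 1)
  rw [norm_div, norm_div, Real.norm_of_nonneg h1.le, Real.norm_of_nonneg h2.le, norm_pow, norm_pow,
    pow_succ, Real.norm_eq_abs, ← mul_div_assoc, div_le_div_iff₀ h2 h1, e]
  have : Real.Gamma (n * α + β) * (2 * |z|) ≤ Real.Gamma (n * α + β + α) :=
    le_trans (by gcongr) hg
  have h3 : 0 ≤ |z| ^ n := by positivity
  nlinarith [mul_le_mul_of_nonneg_left this h3]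

lemma mlG_continuous {α β : ℝ} (hα : 0 < α) (hβ : 0 < β) : Continuous (mlG α β) := by
  have hpos : ∀ n : ℕ, 0 < Real.Gamma (n * α + β) := fun n => Real.Gamma_pos_of_pos (by positivity)
  rw [continuous_iff_continuousAt]
  intro x
  have : ContinuousOn (mlG α β) (Metric.ball 0 (|x| + 1)) := by
    refine continuousOn_tsum (u := fun n : ℕ => (|x| + 1) ^ n / Real.Gamma (n * α + β)) ?_
      (mlG_summable hα hβ _) ?_
    · intro n; fun_prop
    · intro n y hy
      rw [norm_div, Real.norm_of_nonneg (hpos n).le, norm_pow]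
      have : ‖y‖ ≤ |x| + 1 := by simpa using (mem_ball_zero_iff.1 hy).le
      have := hpos n
      gcongr
  exact this.continuousAt (Metric.isOpen_ball.mem_nhds (by simp))

lemma mlE_hasDerivAt {α : ℝ} (hα : 0 < α) (z : ℝ) :
    HasDerivAt (mlE α) (mlG α α z / α) z := by
  have hpos : ∀ n : ℕ, 0 < Real.Gamma (n * α + α) := fun n => Real.Gamma_pos_of_pos (by positivity)
  set R := |z| + 1
  have hG : ∀ n : ℕ, Real.Gamma (((n + 1 : ℕ) : ℝ) * α + 1) = (n + 1) * α * Real.Gamma (n * α + α) := by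
    intro n
    rw [Real.Gamma_add_one (by positivity)]
    push_cast
    rw [show ((n:ℝ) + 1) * α = n * α + α by ring]
  have hs : Summable (fun n : ℕ => (n : ℝ) * R ^ (n - 1) / Real.Gamma (n * α + 1)) := by
    rw [← summable_nat_add_iff 1]
    refine ((mlG_summable hα hα R).div_const α).congr fun n => ?_
    rw [hG]
    have := hpos n
    push_cast
    try simp only [add_tsub_cancel_right]
    field_simp
  have key := hasDerivAt_tsum_of_isPreconnected (𝕜 := ℝ) (F := ℝ)
    (g := fun (n : ℕ) (y : ℝ) => y ^ n / Real.Gamma (n * α + 1))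
    (g' := fun (n : ℕ) (y : ℝ) => n * y ^ (n - 1) / Real.Gamma (n * α + 1))
    (t := Metric.ball 0 R) (y₀ := z) (y := z) hs Metric.isOpen_ball
    (convex_ball (0:ℝ) R).isPreconnected
    (fun n y _ => (hasDerivAt_pow n y).div_const _) ?_ (by simp [R]) (mlG_summable hα one_pos z)
    (by simp [R])
  · suffices eq : mlG α α z / α = ∑' n : ℕ, (n : ℝ) * z ^ (n - 1) / Real.Gamma (n * α + 1) by
      rw [eq]; exact key
    have hs2 : Summable (fun n : ℕ => (n : ℝ) * z ^ (n - 1) / Real.Gamma (n * α + 1)) := by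
      rw [← summable_nat_add_iff 1]
      refine ((mlG_summable hα hα z).div_const α).congr fun n => ?_
      rw [hG]
      have := hpos n
      push_cast
      try simp only [add_tsub_cancel_right]
      field_simp
    rw [hs2.tsum_eq_zero_add, mlG, ← tsum_div_const]
    simp only [Nat.cast_zero, zero_mul, zero_div, zero_add]
    refine tsum_congr fun n => ?_
    rw [hG]
    have := hpos n
    push_cast
    try simp only [add_tsub_cancel_right]
    field_simp
  · intro n y hy
    have h0 : 0 < Real.Gamma (n * α + 1) := Real.Gamma_pos_of_pos (by positivity)
    rw [norm_div, Real.norm_of_nonneg h0.le, norm_mul, norm_pow, RCLike.norm_natCast]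
    have : ‖y‖ ≤ R := by simpa using (mem_ball_zero_iff.1 hy).le
    gcongr

lemma ml_term {α β t s : ℝ} (hs : 0 < s) (n : ℕ) :
    s ^ (β - 1) * (t - s) ^ (α - 1) * ((-s ^ α) ^ n / Real.Gamma (n * α + β))
      = (-1) ^ n / Real.Gamma (n * α + β) * (s ^ (n * α + β - 1) * (t - s) ^ (α - 1)) := by
  have : s ^ ((n:ℝ) * α + β - 1) = (s ^ α) ^ n * s ^ (β - 1) := by
    rw [← Real.rpow_natCast, ← Real.rpow_mul hs.le, ← Real.rpow_add hs]
    congr 1; ring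
  rw [this, neg_pow]
  ring

lemma ml_volterra {α β t : ℝ} (hα : 0 < α) (hβ : 0 < β) (ht : 0 < t) :
    ∫ s in (0:ℝ)..t, s ^ (β - 1) * (t - s) ^ (α - 1) * mlG α β (-s ^ α)
      = Real.Gamma α * t ^ (β - 1) * (1 / Real.Gamma β - mlG α β (-t ^ α)) := by
  have hpos : ∀ n : ℕ, 0 < Real.Gamma (n * α + β) := fun n => Real.Gamma_pos_of_pos (by positivity)
  have hGα := Real.Gamma_pos_of_pos hα
  have hp : ∀ n : ℕ, 0 < (n:ℝ) * α + β := fun n => by positivity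
  let F : ℕ → ℝ → ℝ := fun n s =>
    s ^ (β - 1) * (t - s) ^ (α - 1) * ((-s ^ α) ^ n / Real.Gamma (n * α + β))
  have hb : ∀ n : ℕ, ∫ s in Set.Ioc 0 t, s ^ ((n:ℝ) * α + β - 1) * (t - s) ^ (α - 1)
      = t ^ (β - 1) * (t ^ α) ^ (n + 1) * (Real.Gamma (n * α + β) * Real.Gamma α
        / Real.Gamma ((n + 1 : ℕ) * α + β)) := by
    intro n
    rw [← intervalIntegral.integral_of_le ht.le, beta_scaled_real (hp n) hα ht]
    have e1 : (n:ℝ) * α + β + α = (n + 1 : ℕ) * α + β := by push_cast; ring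
    rw [e1, ← Real.rpow_natCast, ← Real.rpow_mul ht.le, ← Real.rpow_add ht]
    congr 2; push_cast; ring
  have hint : ∀ n, IntegrableOn (F n) (Set.Ioc 0 t) := by
    intro n
    have h := ((beta_scaled_int (hp n) hα ht).1).const_mul ((-1) ^ n / Real.Gamma (n * α + β))
    refine IntegrableOn.congr_fun h (fun s hs => ?_) measurableSet_Ioc
    exact (ml_term hs.1 n).symm
  have hval : ∀ n, ∫ s in Set.Ioc 0 t, F n s
      = -(Real.Gamma α * t ^ (β - 1)) * ((-t ^ α) ^ (n + 1) / Real.Gamma ((n + 1 : ℕ) * α + β)) := by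
    intro n
    rw [setIntegral_congr_fun measurableSet_Ioc (fun s hs => ml_term hs.1 n), integral_const_mul,
      hb n, neg_pow (t ^ α)]
    have := hpos n
    have := hpos (n + 1)
    field_simp
    ring
  have hnorm : ∀ n, ∫ s in Set.Ioc 0 t, ‖F n s‖
      = (Real.Gamma α * t ^ (β - 1)) * ((t ^ α) ^ (n + 1) / Real.Gamma ((n + 1 : ℕ) * α + β)) := by
    intro n
    have : ∀ s ∈ Set.Ioc 0 t, ‖F n s‖ =
        1 / Real.Gamma (n * α + β) * (s ^ (n * α + β - 1) * (t - s) ^ (α - 1)) := by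
      intro s hs
      have h1 : 0 ≤ t - s := by linarith [hs.2]
      have h2 : 0 ≤ s := hs.1.le
      simp only [F]
      rw [ml_term hs.1 n, norm_mul, norm_div, norm_pow, norm_neg, norm_one, one_pow,
        Real.norm_of_nonneg (hpos n).le, Real.norm_of_nonneg (by positivity)]
    rw [setIntegral_congr_fun measurableSet_Ioc this, integral_const_mul, hb n]
    have := hpos n
    have := hpos (n + 1)
    field_simp
  have hsum := hasSum_integral_of_summable_integral_norm (μ := volume.restrict (Set.Ioc 0 t)) hint (by
    simp_rw [hnorm]
    exact (((summable_nat_add_iff 1).2 (mlG_summable hα hβ (t ^ α)))).mul_left _)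
  simp_rw [hval] at hsum
  have hs2 := (((summable_nat_add_iff 1).2 (mlG_summable hα hβ (-t ^ α)))).hasSum.mul_left
    (-(Real.Gamma α * t ^ (β - 1)))
  have heq := hsum.unique hs2
  rw [intervalIntegral.integral_of_le ht.le]
  have e : mlG α β (-t ^ α) = 1 / Real.Gamma β
      + ∑' n : ℕ, (-t ^ α) ^ (n + 1) / Real.Gamma ((n + 1 : ℕ) * α + β) := by
    rw [mlG, (mlG_summable hα hβ (-t ^ α)).tsum_eq_zero_add]
    simp
  rw [e]
  calc _ = ∫ s in Set.Ioc 0 t, ∑' n, F n s := by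
        refine setIntegral_congr_fun measurableSet_Ioc fun s hs => ?_
        simp only [F, mlG]
        rw [tsum_mul_left]
    _ = _ := by rw [heq]; ring

lemma ml_pos_t {α β : ℝ} (hα : 0 < α) (hα1 : α < 1) (hβα : α ≤ β) (hβ1 : β ≤ 1) :
    ∀ t : ℝ, 0 ≤ t → 0 < mlG α β (-t ^ α) := by
  have hβ : 0 < β := by linarith
  have hGα := Real.Gamma_pos_of_pos hα
  have hGβ := Real.Gamma_pos_of_pos hβ
  set w : ℝ → ℝ := fun t => mlG α β (-t ^ α) with hw
  have hwc : Continuous w :=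
    (mlG_continuous hα hβ).comp (Real.continuous_rpow_const hα.le).neg
  have hw0 : 0 < w 0 := by
    simp only [hw, mlG]
    rw [Real.zero_rpow hα.ne', (mlG_summable hα hβ (-0)).tsum_eq_zero_add]
    simpa using hGβ
  by_contra! hcon
  obtain ⟨t', ht'0, ht'⟩ := hcon
  -- first zero
  let S : Set ℝ := {t | 0 ≤ t ∧ w t ≤ 0}
  have hSc : IsClosed S := (isClosed_le continuous_const continuous_id).inter
    (isClosed_le hwc continuous_const)
  have hSb : BddBelow S := ⟨0, fun t ht => ht.1⟩
  have hSm : sInf S ∈ S := hSc.csInf_mem ⟨t', ht'0, ht'⟩ hSb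
  set t1 := sInf S with ht1def
  have ht1 : 0 < t1 := by
    rcases hSm.1.lt_or_eq with h | h
    · exact h
    · have := hSm.2; rw [← h] at this; linarith
  have hpos : ∀ s, 0 ≤ s → s < t1 → 0 < w s := by
    intro s hs hst
    by_contra! h
    exact absurd (csInf_le hSb (show s ∈ S from ⟨hs, h⟩)) (not_le.2 hst)
  -- choose a
  obtain ⟨a, ha0, hat, haS⟩ : ∃ a, 0 < a ∧ a < t1 ∧
      ∀ t ∈ Set.Ico a t1, (t1 / t) ^ (1 - α) * (t1 - t) ^ α < α * Real.Gamma α := by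
    have hc : ContinuousAt (fun t : ℝ => (t1 / t) ^ (1 - α) * (t1 - t) ^ α) t1 := by
      refine ContinuousAt.mul (ContinuousAt.rpow_const ?_ (Or.inr (by linarith)))
        (ContinuousAt.rpow_const (by fun_prop) (Or.inr hα.le))
      exact continuousAt_const.div continuousAt_id ht1.ne'
    have hev : ∀ᶠ t in 𝓝 t1, (t1 / t) ^ (1 - α) * (t1 - t) ^ α < α * Real.Gamma α := by
      refine hc.eventually_lt continuousAt_const ?_
      rw [sub_self, Real.zero_rpow hα.ne', mul_zero]
      positivity
    obtain ⟨ε, hε, hb⟩ := Metric.eventually_nhds_iff.1 hev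
    refine ⟨max (t1 / 2) (t1 - ε / 2), by positivity, max_lt (by linarith) (by linarith), ?_⟩
    intro t ht
    apply hb
    have := le_trans (le_max_right _ _) ht.1
    rw [Real.dist_eq, abs_lt]
    constructor <;> linarith [ht.2]
  obtain ⟨t, htm, htmax⟩ := isCompact_Icc.exists_isMaxOn (Set.nonempty_Icc.2 hat.le)
    hwc.continuousOn
  have hwt : 0 < w t := lt_of_lt_of_le (hpos a ha0.le hat) (htmax (Set.left_mem_Icc.2 hat.le))
  have htt1 : t < t1 := by
    rcases htm.2.lt_or_eq with h | h
    · exact h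
    · have := hSm.2; rw [← h] at this; linarith
  have ht0 : 0 < t := lt_of_lt_of_le ha0 htm.1
  have hlt := haS t ⟨htm.1, htt1⟩
  have V1 := ml_volterra hα hβ ht1
  have V := ml_volterra hα hβ ht0
  have I1 : IntervalIntegrable (fun s => s ^ (β - 1) * (t1 - s) ^ (α - 1) * w s) volume 0 t1 :=
    (beta_scaled_int hβ hα ht1).mul_continuousOn hwc.continuousOn
  have I : IntervalIntegrable (fun s => s ^ (β - 1) * (t - s) ^ (α - 1) * w s) volume 0 t :=
    (beta_scaled_int hβ hα ht0).mul_continuousOn hwc.continuousOn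
  have I1a : IntervalIntegrable (fun s => s ^ (β - 1) * (t1 - s) ^ (α - 1) * w s) volume 0 t :=
    I1.mono_set (by rw [Set.uIcc_of_le ht0.le, Set.uIcc_of_le ht1.le]; exact Set.Icc_subset_Icc_right htt1.le)
  have I1b : IntervalIntegrable (fun s => s ^ (β - 1) * (t1 - s) ^ (α - 1) * w s) volume t t1 :=
    I1.mono_set (by rw [Set.uIcc_of_le htt1.le, Set.uIcc_of_le ht1.le]; exact Set.Icc_subset_Icc_left ht0.le)
  have hsplit := intervalIntegral.integral_add_adjacent_intervals I1a I1b
  -- first piece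
  have A : ∫ s in (0:ℝ)..t, s ^ (β - 1) * (t1 - s) ^ (α - 1) * w s
      ≤ (t1 / t) ^ (α - 1) * (∫ s in (0:ℝ)..t, s ^ (β - 1) * (t - s) ^ (α - 1) * w s) := by
    rw [← intervalIntegral.integral_const_mul]
    refine intervalIntegral.integral_mono_on_of_le_Ioo ht0.le I1a (I.const_mul _) fun s hs => ?_
    have h1 : 0 < t - s := by linarith [hs.2]
    have h2 : 0 < t1 - s := by linarith
    have h3 : (t1 - s) ^ (α - 1) ≤ (t1 / t) ^ (α - 1) * (t - s) ^ (α - 1) := by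
      rw [← Real.mul_rpow (by positivity) h1.le]
      refine Real.rpow_le_rpow_of_nonpos (by positivity) ?_ (by linarith)
      rw [div_mul_eq_mul_div, div_le_iff₀ ht0]
      nlinarith [hs.1]
    have h4 : 0 < w s := hpos s hs.1.le (hs.2.trans htt1)
    have h5 : 0 < s ^ (β - 1) := Real.rpow_pos_of_pos hs.1 _
    calc s ^ (β - 1) * (t1 - s) ^ (α - 1) * w s
        ≤ s ^ (β - 1) * ((t1 / t) ^ (α - 1) * (t - s) ^ (α - 1)) * w s := by gcongr
      _ = _ := by ring
  have Bint : ∫ s in t..t1, (t1 - s) ^ (α - 1) = (t1 - t) ^ α / α := by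
    rw [intervalIntegral.integral_comp_sub_left (fun x => x ^ (α - 1)) t1, sub_self,
      integral_rpow (Or.inl (by linarith))]
    simp [Real.zero_rpow hα.ne']
  have Bii : IntervalIntegrable (fun s => (t1 - s) ^ (α - 1)) volume t t1 := by
    by_contra h
    have := intervalIntegral.integral_undef h
    rw [Bint] at this
    have h1 : 0 < t1 - t := by linarith
    have : 0 < (t1 - t) ^ α / α := by positivity
    linarith
  have Bd : ∫ s in t..t1, s ^ (β - 1) * (t1 - s) ^ (α - 1) * w s
      ≤ t ^ (β - 1) * w t * ((t1 - t) ^ α / α) := by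
    rw [← Bint, ← intervalIntegral.integral_const_mul]
    refine intervalIntegral.integral_mono_on_of_le_Ioo htt1.le I1b (Bii.const_mul _) fun s hs => ?_
    have h1 : 0 < t1 - s := by linarith [hs.2]
    have h2 : s ^ (β - 1) ≤ t ^ (β - 1) :=
      Real.rpow_le_rpow_of_nonpos ht0 hs.1.le (by linarith)
    have h3 : w s ≤ w t := htmax ⟨htm.1.trans hs.1.le, hs.2.le⟩
    have h4 : 0 < w s := hpos s (ht0.trans hs.1).le hs.2
    calc s ^ (β - 1) * (t1 - s) ^ (α - 1) * w s
        ≤ t ^ (β - 1) * (t1 - s) ^ (α - 1) * w t := by gcongr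
      _ = _ := by ring
  change ∫ s in (0:ℝ)..t1, s ^ (β - 1) * (t1 - s) ^ (α - 1) * w s
      = Real.Gamma α * t1 ^ (β - 1) * (1 / Real.Gamma β - w t1) at V1
  change ∫ s in (0:ℝ)..t, s ^ (β - 1) * (t - s) ^ (α - 1) * w s
      = Real.Gamma α * t ^ (β - 1) * (1 / Real.Gamma β - w t) at V
  rw [V] at A
  rw [V1] at hsplit
  have hw1 : w t1 ≤ 0 := hSm.2
  -- P = t1^(β-1) ≥ (t1/t)^(α-1) t^(β-1)
  have hP : (t1 / t) ^ (α - 1) * t ^ (β - 1) ≤ t1 ^ (β - 1) := by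
    have : t1 ^ (β - 1) = (t1 / t) ^ (β - 1) * t ^ (β - 1) := by
      rw [← Real.mul_rpow (by positivity) ht0.le, div_mul_cancel₀ _ ht0.ne']
    rw [this]
    have h1 : 1 ≤ t1 / t := by rw [le_div_iff₀ ht0]; linarith
    gcongr
  have hq : (t1 / t) ^ (1 - α) * (t1 / t) ^ (α - 1) = 1 := by
    rw [← Real.rpow_add (by positivity)]; simp
  set q := (t1 / t) ^ (α - 1)
  set q' := (t1 / t) ^ (1 - α)
  set P := t1 ^ (β - 1)
  set p := t ^ (β - 1)
  have hqp : 0 < q := Real.rpow_pos_of_pos (by positivity) _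
  have hpp : 0 < p := Real.rpow_pos_of_pos ht0 _
  have hPp : 0 < P := Real.rpow_pos_of_pos ht1 _
  have s1 : Real.Gamma α * P * (1 / Real.Gamma β) ≤ Real.Gamma α * P * (1 / Real.Gamma β - w t1) := by
    gcongr; linarith
  have s2 : Real.Gamma α * (q * p) * (1 / Real.Gamma β) ≤ Real.Gamma α * P * (1 / Real.Gamma β) := by
    gcongr
  have s3 : Real.Gamma α * (q * p) * w t ≤ p * w t * ((t1 - t) ^ α / α) := by
    have e : q * (Real.Gamma α * p * (1 / Real.Gamma β - w t))
      = Real.Gamma α * (q * p) * (1 / Real.Gamma β) - Real.Gamma α * (q * p) * w t := by ring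
    rw [e] at A
    linarith
  have s4 : Real.Gamma α * q ≤ (t1 - t) ^ α / α := by
    have : 0 < p * w t := by positivity
    refine le_of_mul_le_mul_left ?_ this
    linarith
  rw [le_div_iff₀ hα] at s4
  have s5 : q * (q' * (t1 - t) ^ α) < q * (α * Real.Gamma α) := by gcongr
  have : q * (q' * (t1 - t) ^ α) = (t1 - t) ^ α := by
    rw [← mul_assoc, mul_comm q q', hq, one_mul]
  linarith

lemma ml_pos {α β : ℝ} (hα : 0 < α) (hα1 : α < 1) (hβα : α ≤ β) (hβ1 : β ≤ 1) {x : ℝ}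
    (hx : x ≤ 0) : 0 < mlG α β x := by
  have := ml_pos_t hα hα1 hβα hβ1 ((-x) ^ (1 / α)) (Real.rpow_nonneg (by linarith) _)
  rw [← Real.rpow_mul (by linarith), one_div_mul_cancel hα.ne', Real.rpow_one, neg_neg] at this
  exact this

theorem abc_deriv_nonneg_at_zero_from_below
    (T α B : ℝ) (hT : 0 < T) (hα : 0 < α) (hα1 : α < 1) (hB : 0 < B)
    (m : ℝ → ℝ)
    (hmdiff : ∀ τ ∈ Set.Icc (0:ℝ) T, DifferentiableAt ℝ m τ)
    (hcont : ContinuousOn (abcD α B m) (Set.Icc (0:ℝ) T))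
    (τ₀ : ℝ) (hτ₀ : τ₀ ∈ Set.Ioc (0:ℝ) T)
    (hm0 : m τ₀ = 0)
    (hneg : ∀ τ ∈ Set.Ico (0:ℝ) τ₀, m τ ≤ 0) :
    0 ≤ abcD α B m τ₀ := by
  have h1α : 0 < 1 - α := by linarith
  have hτ := hτ₀.1
  refine mul_nonneg (by positivity) ?_
  set L := α / (1 - α) with hL
  have hLp : 0 < L := by positivity
  set g : ℝ → ℝ := fun σ => mlE α (-L * (τ₀ - σ) ^ α) with hg
  change 0 ≤ ∫ σ in (0:ℝ)..τ₀, g σ * deriv m σ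
  have hEc : Continuous (mlE α) := mlG_continuous hα one_pos
  have hgc : Continuous g :=
    hEc.comp (continuous_const.mul ((continuous_const.sub continuous_id).rpow_const
      (fun _ => Or.inr hα.le)))
  have harg : ∀ σ ≤ τ₀, -L * (τ₀ - σ) ^ α ≤ 0 := by
    intro σ hσ
    have : 0 ≤ (τ₀ - σ) ^ α := Real.rpow_nonneg (by linarith) _
    nlinarith
  have hgpos : ∀ σ ≤ τ₀, 0 < g σ := fun σ hσ => ml_pos hα hα1 hα1.le le_rfl (harg σ hσ)
  by_cases hi : IntervalIntegrable (fun σ => g σ * deriv m σ) volume 0 τ₀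
  swap
  · rw [intervalIntegral.integral_undef hi]
  have hu : Set.uIcc 0 τ₀ = Set.Icc 0 τ₀ := Set.uIcc_of_le hτ.le
  have hsub : ∀ x ∈ Set.Icc 0 τ₀, x ∈ Set.Icc 0 T := fun x hx => ⟨hx.1, hx.2.trans hτ₀.2⟩
  have hm' : IntervalIntegrable (deriv m) volume 0 τ₀ := by
    have h := hi.continuousOn_mul (g := fun σ => (g σ)⁻¹) (by
      rw [hu]
      exact hgc.continuousOn.inv₀ fun x hx => (hgpos x hx.2).ne')
    refine h.congr ?_
    intro x hx
    rw [Set.uIoc_of_le hτ.le] at hx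
    have := (hgpos x hx.2).ne'
    simp only
    field_simp
  let g' : ℝ → ℝ := fun σ => mlG α α (-L * (τ₀ - σ) ^ α) / α * (L * α * (τ₀ - σ) ^ (α - 1))
  have hgd : ∀ x ∈ Set.Ioo (min 0 τ₀) (max 0 τ₀), HasDerivAt g (g' x) x := by
    intro x hx
    rw [min_eq_left hτ.le, max_eq_right hτ.le] at hx
    have h1 : 0 < τ₀ - x := by linarith [hx.2]
    have h2 : HasDerivAt (fun σ => -L * (τ₀ - σ) ^ α) (L * α * (τ₀ - x) ^ (α - 1)) x := by
      have := (((hasDerivAt_id x).const_sub τ₀).rpow_const (p := α) (Or.inl h1.ne')).const_mul (-L)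
      refine this.congr_deriv ?_
      simp only [id]
      ring
    exact (mlE_hasDerivAt hα _).comp x h2
  have hgn : ∀ x ∈ Set.Ioo (min 0 τ₀) (max 0 τ₀), 0 ≤ g' x := by
    intro x hx
    rw [min_eq_left hτ.le, max_eq_right hτ.le] at hx
    have h1 : 0 < τ₀ - x := by linarith [hx.2]
    have := ml_pos hα hα1 le_rfl hα1.le (harg x hx.2.le)
    positivity
  have hg'i := intervalIntegral.intervalIntegrable_deriv_of_nonneg hgc.continuousOn hgd hgn
  have hmc : ContinuousOn m (Set.uIcc 0 τ₀) := by
    rw [hu]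
    exact fun x hx => (hmdiff x (hsub x hx)).continuousAt.continuousWithinAt
  rw [intervalIntegral.integral_mul_deriv_eq_deriv_mul_of_hasDerivAt hgc.continuousOn hmc hgd
    (fun x hx => (hmdiff x (hsub x (by
      rw [min_eq_left hτ.le, max_eq_right hτ.le] at hx
      exact ⟨hx.1.le, hx.2.le⟩))).hasDerivAt) hg'i hm', hm0]
  have hI : ∫ x in (0:ℝ)..τ₀, g' x * m x ≤ 0 := by
    have := intervalIntegral.integral_mono_on_of_le_Ioo hτ.le (hg'i.mul_continuousOn hmc)
      (intervalIntegrable_const (c := (0:ℝ))) (fun x hx => by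
        have h1 := hgn x (by rwa [min_eq_left hτ.le, max_eq_right hτ.le])
        exact mul_nonpos_of_nonneg_of_nonpos h1 (hneg x ⟨hx.1.le, hx.2⟩))
    simpa using this
  have h0 : g 0 * m 0 ≤ 0 :=
    mul_nonpos_of_nonneg_of_nonpos (hgpos 0 hτ.le).le (hneg 0 ⟨le_rfl, hτ⟩)
  linarith
end

section
/- Let m : J → ℝ be differentiable on J with (^{ABC}D^α m) continuous on J. If there exists τ₀ ∈ (0,T] with m(τ₀) = 0 and m(τ) ≥ 0 for all τ ∈ [0,τ₀), then (^{ABC}D^α m)(τ₀) ≤ 0. -/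
open MeasureTheory Set Filter Topology

/-- Two-parameter Mittag-Leffler function. -/
noncomputable def mlE2 (α β z : ℝ) : ℝ := ∑' n : ℕ, z ^ n / Real.Gamma (n * α + β)

theorem ml_gamma_lower {K x : ℝ} (hK : 0 < K) (hx : 1 ≤ x) :
    Real.exp (-K) * K ^ (x - 1) ≤ Real.Gamma x := by
  rw [Real.Gamma_eq_integral (by linarith)]
  have hint := Real.GammaIntegral_convergent (s := x) (by linarith)
  calc Real.exp (-K) * K ^ (x - 1)
      = ∫ t in Ioi K, Real.exp (-t) * K ^ (x - 1) := by
        rw [integral_mul_const, integral_exp_neg_Ioi]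
    _ ≤ ∫ t in Ioi K, Real.exp (-t) * t ^ (x - 1) := by
        refine setIntegral_mono_on ?_ (hint.mono_set (Ioi_subset_Ioi hK.le)) measurableSet_Ioi ?_
        · exact ((integrableOn_exp_neg_Ioi K)).mul_const _
        · intro t ht
          have ht : K < t := ht
          gcongr
    _ ≤ _ := by
        refine setIntegral_mono_set hint ?_ (Ioi_subset_Ioi hK.le).eventuallyLE
        refine (ae_restrict_iff' measurableSet_Ioi).2 (Eventually.of_forall fun t ht => ?_)
        have ht : 0 < t := ht
        simp only [Pi.zero_apply]
        positivity

theorem ml_summable {α β : ℝ} (hα : 0 < α) (_hβ : 0 < β) (z : ℝ) :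
    Summable (fun n : ℕ => z ^ n / Real.Gamma (n * α + β)) := by
  obtain ⟨K, hK0, hK⟩ : ∃ K : ℝ, 0 < K ∧ |z| / K ^ α < 1 := by
    have := (tendsto_rpow_atTop hα).eventually_gt_atTop |z|
    obtain ⟨K, h1, h2⟩ := (this.and (eventually_gt_atTop 0)).exists
    exact ⟨K, h2, by rw [div_lt_one (by positivity)]; exact h1⟩
  have hg : Summable (fun n : ℕ => (Real.exp K * K ^ (1 - β)) * (|z| / K ^ α) ^ n) :=
    (summable_geometric_of_lt_one (by positivity) hK).mul_left _
  refine Summable.of_norm_bounded_eventually_nat hg ?_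
  have hl : Tendsto (fun n : ℕ => (n : ℝ) * α + β) atTop atTop :=
    tendsto_atTop_add_const_right _ _ (tendsto_natCast_atTop_atTop.atTop_mul_const hα)
  filter_upwards [hl.eventually_ge_atTop 1] with n hn
  have h := ml_gamma_lower hK0 hn
  have hpos : 0 < Real.exp (-K) * K ^ ((n : ℝ) * α + β - 1) := by positivity
  rw [norm_div, norm_pow, Real.norm_eq_abs, Real.norm_eq_abs,
    abs_of_pos (hpos.trans_le h)]
  calc |z| ^ n / Real.Gamma (n * α + β) ≤ |z| ^ n / (Real.exp (-K) * K ^ ((n : ℝ) * α + β - 1)) := by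
        gcongr
    _ = _ := by
        have e1 : K ^ ((n : ℝ) * α + β - 1) = (K ^ α) ^ n * (K ^ (1 - β))⁻¹ := by
          rw [← Real.rpow_natCast, ← Real.rpow_mul hK0.le, ← Real.rpow_neg hK0.le,
            ← Real.rpow_add hK0]
          congr 1; ring
        rw [e1, Real.exp_neg, div_pow]
        field_simp

theorem mlE2_continuous {α β : ℝ} (hα : 0 < α) (hβ : 0 < β) : Continuous (mlE2 α β) := by
  rw [continuous_iff_continuousAt]
  intro z
  have : ContinuousOn (mlE2 α β) (Metric.ball 0 (|z| + 1)) := by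
    refine continuousOn_tsum (u := fun n : ℕ => (|z| + 1) ^ n / Real.Gamma (n * α + β)) ?_
      (ml_summable hα hβ _) ?_
    · intro i; fun_prop
    · intro n x hx
      have hG : 0 < Real.Gamma (n * α + β) := Real.Gamma_pos_of_pos (by positivity)
      rw [norm_div, norm_pow, Real.norm_of_nonneg hG.le]
      have : ‖x‖ ≤ |z| + 1 := by simpa using (mem_ball_zero_iff.1 hx).le
      gcongr
  refine this.continuousAt (Metric.isOpen_ball.mem_nhds ?_)
  simp

theorem mlE2_shift {α β : ℝ} (hα : 0 < α) (hβ : 0 < β) (z : ℝ) :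
    mlE2 α β z = 1 / Real.Gamma β + z * mlE2 α (α + β) z := by
  unfold mlE2
  rw [(ml_summable hα hβ z).tsum_eq_zero_add, ← tsum_mul_left]
  congr 1
  · simp
  · refine tsum_congr fun n => ?_
    push_cast
    rw [pow_succ', mul_div_assoc]
    congr 3; ring

theorem ml_beta {p q t : ℝ} (hp : 0 < p) (hq : 0 < q) (ht : 0 < t) :
    ∫ s in (0:ℝ)..t, (t - s) ^ (q - 1) * s ^ (p - 1)
      = t ^ (p + q - 1) * (Real.Gamma p * Real.Gamma q / Real.Gamma (p + q)) := by
  have h := Complex.betaIntegral_scaled (p : ℂ) (q : ℂ) ht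
  rw [Complex.betaIntegral_eq_Gamma_mul_div _ _ (by simpa) (by simpa)] at h
  apply Complex.ofReal_injective
  rw [← intervalIntegral.integral_ofReal]
  have e : (∫ s in (0:ℝ)..t, (((t - s) ^ (q - 1) * s ^ (p - 1) : ℝ) : ℂ)) =
      ∫ x in (0:ℝ)..t, (x : ℂ) ^ ((p:ℂ) - 1) * ((t : ℂ) - x) ^ ((q:ℂ) - 1) := by
    refine intervalIntegral.integral_congr fun s hs => ?_
    rw [uIcc_of_le ht.le] at hs
    rw [Complex.ofReal_mul, Complex.ofReal_cpow hs.1, Complex.ofReal_cpow (by linarith [hs.2])]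
    push_cast
    ring
  rw [e, h]
  rw [Complex.ofReal_mul, Complex.ofReal_cpow ht.le, ← Complex.ofReal_add, Complex.Gamma_ofReal,
    Complex.Gamma_ofReal, Complex.Gamma_ofReal]
  push_cast
  ring

theorem ml_beta_int {p q t : ℝ} (hp : 0 < p) (hq : 0 < q) (ht : 0 < t) :
    IntervalIntegrable (fun s => (t - s) ^ (q - 1) * s ^ (p - 1)) volume 0 t := by
  by_contra h
  have h1 := ml_beta hp hq ht
  rw [intervalIntegral.integral_undef h] at h1
  have := Real.Gamma_pos_of_pos hp
  have := Real.Gamma_pos_of_pos hq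
  have := Real.Gamma_pos_of_pos (add_pos hp hq)
  have : 0 < t ^ (p + q - 1) * (Real.Gamma p * Real.Gamma q / Real.Gamma (p + q)) := by positivity
  linarith

/-- The kernel `v`. -/
noncomputable def mlV (α L s : ℝ) : ℝ := s ^ (α - 1) * mlE2 α α (-L * s ^ α)

theorem mlV_int {α β L t : ℝ} (hα : 0 < α) (hβ : 0 < β) (ht : 0 < t) :
    IntervalIntegrable (fun s => (t - s) ^ (β - 1) * mlV α L s) volume 0 t := by
  have h := (ml_beta_int hα hβ ht).mul_continuousOn (g := fun s => mlE2 α α (-L * s ^ α)) (by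
    have := mlE2_continuous hα hα
    have h2 : Continuous fun s : ℝ => s ^ α := Real.continuous_rpow_const hα.le
    fun_prop)
  refine h.congr ?_
  intro s _
  simp only [mlV]; ring

theorem mlV_conv {α β L t : ℝ} (hα : 0 < α) (hβ : 0 < β) (ht : 0 < t) :
    ∫ s in (0:ℝ)..t, (t - s) ^ (β - 1) * mlV α L s
      = Real.Gamma β * t ^ (α + β - 1) * mlE2 α (α + β) (-L * t ^ α) := by
  set f : ℕ → ℝ → ℝ := fun n s =>
    (-L) ^ n / Real.Gamma (n * α + α) * ((t - s) ^ (β - 1) * s ^ ((n * α + α) - 1)) with hf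
  have hp : ∀ n : ℕ, 0 < (n : ℝ) * α + α := fun n => by positivity
  have hpw : ∀ n : ℕ, t ^ ((n : ℝ) * α + α + β - 1) = t ^ (α + β - 1) * (t ^ α) ^ n := by
    intro n
    rw [← Real.rpow_natCast, ← Real.rpow_mul ht.le, ← Real.rpow_add ht]
    congr 1; ring
  have hfi : ∀ n, IntegrableOn (f n) (Ioc 0 t) := by
    intro n
    rw [← intervalIntegrable_iff_integrableOn_Ioc_of_le ht.le]
    exact (ml_beta_int (hp n) hβ ht).const_mul _
  have hval : ∀ n : ℕ, ∫ s in Ioc 0 t, (t - s) ^ (β - 1) * s ^ ((n * α + α) - 1) =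
      Real.Gamma (n * α + α) * (Real.Gamma β * t ^ (α + β - 1) *
        ((t ^ α) ^ n / Real.Gamma (n * α + (α + β)))) := by
    intro n
    rw [← intervalIntegral.integral_of_le ht.le, ml_beta (hp n) hβ ht, hpw n, ← add_assoc]
    ring
  have hfv : ∀ n, ∫ s in Ioc 0 t, f n s = Real.Gamma β * t ^ (α + β - 1) *
      ((-L * t ^ α) ^ n / Real.Gamma (n * α + (α + β))) := by
    intro n
    have := Real.Gamma_pos_of_pos (hp n)
    simp only [hf]
    rw [integral_const_mul, hval n, mul_pow]
    field_simp
  have hfn : ∀ n, ∫ s in Ioc 0 t, ‖f n s‖ = Real.Gamma β * t ^ (α + β - 1) *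
      ((|L| * t ^ α) ^ n / Real.Gamma (n * α + (α + β))) := by
    intro n
    have h0 := Real.Gamma_pos_of_pos (hp n)
    have : ∫ s in Ioc 0 t, ‖f n s‖ = ∫ s in Ioc 0 t,
        |L| ^ n / Real.Gamma (n * α + α) * ((t - s) ^ (β - 1) * s ^ ((n * α + α) - 1)) := by
      refine setIntegral_congr_fun measurableSet_Ioc fun s hs => ?_
      have h1 : 0 ≤ t - s := by linarith [hs.2]
      have h2 : 0 ≤ s := hs.1.le
      simp only [hf]
      rw [norm_mul, norm_div, norm_pow, norm_neg, Real.norm_of_nonneg h0.le,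
        Real.norm_of_nonneg (by positivity : 0 ≤ (t - s) ^ (β - 1) * s ^ ((n * α + α) - 1)),
        Real.norm_eq_abs]
    rw [this, integral_const_mul, hval n, mul_pow]
    field_simp
  have hs : HasSum (fun n => ∫ s in Ioc 0 t, f n s) (∫ s in Ioc 0 t, ∑' n, f n s) := by
    refine hasSum_integral_of_summable_integral_norm hfi ?_
    simp_rw [hfn]
    exact (ml_summable hα (by positivity) _).mul_left _
  rw [intervalIntegral.integral_of_le ht.le]
  have e : ∫ s in Ioc 0 t, (t - s) ^ (β - 1) * mlV α L s = ∫ s in Ioc 0 t, ∑' n, f n s := by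
    refine setIntegral_congr_fun measurableSet_Ioc fun s hs => ?_
    simp only [mlV, mlE2, hf]
    rw [← tsum_mul_left, ← tsum_mul_left]
    refine tsum_congr fun n => ?_
    have : s ^ ((n : ℝ) * α + α - 1) = s ^ (α - 1) * (s ^ α) ^ n := by
      rw [← Real.rpow_natCast, ← Real.rpow_mul hs.1.le, ← Real.rpow_add hs.1]
      congr 1; ring
    rw [this, mul_pow]
    ring
  rw [e, ← hs.tsum_eq, mlE2, ← tsum_mul_left]
  exact tsum_congr hfv

theorem mlV_volterra {α L t : ℝ} (hα : 0 < α) (ht : 0 < t) :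
    Real.Gamma α * mlV α L t = t ^ (α - 1) - L * ∫ s in (0:ℝ)..t, (t - s) ^ (α - 1) * mlV α L s := by
  have hG := Real.Gamma_pos_of_pos hα
  rw [mlV_conv hα hα ht, mlV, mlE2_shift hα hα]
  have : t ^ (α + α - 1) = t ^ (α - 1) * t ^ α := by
    rw [← Real.rpow_add ht]; congr 1; ring
  rw [this]
  field_simp
  ring

theorem mlV_int_one {α L t : ℝ} (hα : 0 < α) (ht : 0 < t) :
    IntervalIntegrable (mlV α L) volume 0 t := by
  simpa using mlV_int (L := L) hα one_pos ht

theorem mlE_eq {α L t : ℝ} (hα : 0 < α) (ht : 0 ≤ t) :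
    mlE α (-L * t ^ α) = 1 - L * ∫ s in (0:ℝ)..t, mlV α L s := by
  have h1 : mlE α (-L * t ^ α) = mlE2 α 1 (-L * t ^ α) := rfl
  rw [h1, mlE2_shift hα one_pos, Real.Gamma_one]
  rcases ht.eq_or_lt with rfl | ht
  · simp [Real.zero_rpow hα.ne']
  · have := mlV_conv (L := L) hα one_pos ht
    simp only [sub_self, Real.rpow_zero, one_mul, Real.Gamma_one, add_sub_cancel_right] at this
    rw [this]; ring

theorem mlV_continuousAt {α L t : ℝ} (hα : 0 < α) (ht : 0 < t) : ContinuousAt (mlV α L) t := by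
  have h1 : ContinuousAt (fun s : ℝ => s ^ (α - 1)) t :=
    Real.continuousAt_rpow_const _ _ (Or.inl ht.ne')
  have h2 : Continuous fun s : ℝ => s ^ α := Real.continuous_rpow_const hα.le
  have h3 := mlE2_continuous hα hα
  have h4 : Continuous fun s : ℝ => mlE2 α α (-L * s ^ α) := by fun_prop
  exact h1.mul h4.continuousAt

theorem mlV_pos {α L t : ℝ} (hα : 0 < α) (hα1 : α < 1) (hL : 0 < L) (ht : 0 < t) :
    0 < mlV α L t := by
  have hG := Real.Gamma_pos_of_pos hα
  have h2 : Continuous fun s : ℝ => s ^ α := Real.continuous_rpow_const hα.le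
  have h3 := mlE2_continuous hα hα
  have hpc : Continuous fun s : ℝ => mlE2 α α (-L * s ^ α) := by fun_prop
  by_contra hneg
  push Not at hneg
  -- first nonpositive point
  set S : Set ℝ := Ici 0 ∩ {s | mlE2 α α (-L * s ^ α) ≤ 0} with hS
  have hSc : IsClosed S := isClosed_Ici.inter (isClosed_le hpc continuous_const)
  have hSb : BddBelow S := ⟨0, fun x hx => hx.1⟩
  have hSn : S.Nonempty := by
    refine ⟨t, ht.le, ?_⟩
    by_contra h
    have h' : 0 < mlE2 α α (-L * t ^ α) := not_le.1 h
    have : 0 < mlV α L t := by unfold mlV; positivity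
    linarith
  have hmem := hSc.csInf_mem hSn hSb
  set t0 := sInf S with ht0
  have ht0pos : 0 < t0 := by
    refine lt_of_le_of_ne hmem.1 fun h => ?_
    have h5 := hmem.2
    rw [← h] at h5
    simp only [mem_ofPred_eq, Real.zero_rpow hα.ne', mul_zero] at h5
    rw [mlE2_shift hα hα] at h5
    have : 0 < 1 / Real.Gamma α := by positivity
    linarith
  have hv0 : mlV α L t0 ≤ 0 :=
    mul_nonpos_of_nonneg_of_nonpos (by positivity) hmem.2
  have hvpos : ∀ s, 0 < s → s < t0 → 0 < mlV α L s := by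
    intro s hs hst
    have : ¬ s ∈ S := fun h => (csInf_le hSb h).not_gt hst
    have h6 : 0 < mlE2 α α (-L * s ^ α) := by
      by_contra h
      exact this ⟨hs.le, not_lt.1 h⟩
    unfold mlV
    positivity
  -- choose t1
  obtain ⟨t1, ht1a, ht1b, ht1c⟩ : ∃ t1, t0 / 2 < t1 ∧ t1 < t0 ∧
      L * ((t0 - t1) ^ α / α) < Real.Gamma α / 2 := by
    have hc : Continuous fun x : ℝ => L * ((t0 - x) ^ α / α) := by
      have : Continuous fun x : ℝ => (t0 - x) ^ α := h2.comp (by fun_prop)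
      fun_prop
    have e1 : ∀ᶠ x in 𝓝[<] t0, L * ((t0 - x) ^ α / α) < Real.Gamma α / 2 := by
      refine (hc.continuousAt.eventually_lt_const ?_).filter_mono nhdsWithin_le_nhds
      simp [Real.zero_rpow hα.ne']; positivity
    have e2 : ∀ᶠ x in 𝓝[<] t0, x ∈ Ioo (t0 / 2) t0 := Ioo_mem_nhdsLT (by linarith)
    obtain ⟨x, hx1, hx2⟩ := (e1.and e2).exists
    exact ⟨x, hx2.1, hx2.2, hx1⟩
  have ht1p : 0 < t1 := by linarith
  obtain ⟨r, hr, hmax⟩ := isCompact_Icc.exists_isMaxOn (nonempty_Icc.2 ht1b.le)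
    (f := mlV α L) (fun s hs => (mlV_continuousAt hα (by linarith [hs.1])).continuousWithinAt)
  have hr0 : 0 < r := by linarith [hr.1]
  have hvr : 0 < mlV α L r :=
    (hvpos t1 ht1p ht1b).trans_le (hmax (left_mem_Icc.2 ht1b.le))
  have hrt : r < t0 := lt_of_le_of_ne hr.2 (by rintro h; rw [h] at hvr; linarith)
  have V0 := mlV_volterra (L := L) hα ht0pos
  have Vr := mlV_volterra (L := L) hα hr0
  have I0 := mlV_int (L := L) hα hα ht0pos
  have Ir := mlV_int (L := L) hα hα hr0
  have I01 : IntervalIntegrable (fun s => (t0 - s) ^ (α - 1) * mlV α L s) volume 0 r :=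
    I0.mono_set (by rw [uIcc_of_le hr0.le, uIcc_of_le ht0pos.le]; exact Icc_subset_Icc_right hrt.le)
  have I02 : IntervalIntegrable (fun s => (t0 - s) ^ (α - 1) * mlV α L s) volume r t0 :=
    I0.mono_set (by rw [uIcc_of_le hrt.le, uIcc_of_le ht0pos.le]; exact Icc_subset_Icc_left hr0.le)
  have split := intervalIntegral.integral_add_adjacent_intervals I01 I02
  set c : ℝ := (t0 / r) ^ (α - 1) with hc
  have hcpos : 0 < c := by positivity
  have A : ∫ s in (0:ℝ)..r, (t0 - s) ^ (α - 1) * mlV α L s ≤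
      c * ∫ s in (0:ℝ)..r, (r - s) ^ (α - 1) * mlV α L s := by
    rw [← intervalIntegral.integral_const_mul]
    refine intervalIntegral.integral_mono_on_of_le_Ioo hr0.le I01 (Ir.const_mul _) ?_
    intro s hs
    have hs1 := hs.1
    have hs2 := hs.2
    rw [← mul_assoc]
    refine mul_le_mul_of_nonneg_right ?_ (hvpos s hs1 (by linarith)).le
    rw [hc, ← Real.mul_rpow (by positivity) (by linarith)]
    refine Real.rpow_le_rpow_of_nonpos (mul_pos (by positivity) (by linarith)) ?_ (by linarith)
    rw [div_mul_eq_mul_div, div_le_iff₀ hr0]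
    nlinarith
  have Bint : ∫ s in r..t0, (t0 - s) ^ (α - 1) = (t0 - r) ^ α / α := by
    rw [intervalIntegral.integral_comp_sub_left (fun x => x ^ (α - 1)) t0,
      integral_rpow (Or.inl (by linarith))]
    simp [Real.zero_rpow hα.ne']
  have Bii : IntervalIntegrable (fun s : ℝ => (t0 - s) ^ (α - 1)) volume r t0 := by
    have := (intervalIntegral.intervalIntegrable_rpow' (a := t0 - r) (b := 0) (r := α - 1)
      (by linarith)).comp_sub_left t0
    simpa using this
  have Bb : ∫ s in r..t0, (t0 - s) ^ (α - 1) * mlV α L s ≤ (t0 - r) ^ α / α * mlV α L r := by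
    rw [← Bint, ← intervalIntegral.integral_mul_const]
    refine intervalIntegral.integral_mono_on_of_le_Ioo hrt.le I02 (Bii.mul_const _) ?_
    intro s hs
    refine mul_le_mul_of_nonneg_left (hmax ⟨by linarith [hs.1, hr.1], hs.2.le⟩) ?_
    exact Real.rpow_nonneg (by linarith [hs.2]) _
  have hcr : c * r ^ (α - 1) = t0 ^ (α - 1) := by
    rw [hc, ← Real.mul_rpow (by positivity) hr0.le]
    congr 1; field_simp
  have hch : 1 / 2 ≤ c := by
    have e : c = (r / t0) ^ (1 - α) := by
      rw [hc, ← inv_div, Real.inv_rpow (by positivity), ← Real.rpow_neg (by positivity)]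
      congr 1; ring
    have hle : r / t0 ≤ 1 := (div_le_one ht0pos).2 hrt.le
    have : (r / t0) ^ (1:ℝ) ≤ (r / t0) ^ (1 - α) :=
      Real.rpow_le_rpow_of_exponent_ge (by positivity) hle (by linarith)
    rw [Real.rpow_one] at this
    rw [e]
    refine le_trans ?_ this
    rw [le_div_iff₀ ht0pos]; linarith [hr.1]
  have hmono : (t0 - r) ^ α / α ≤ (t0 - t1) ^ α / α := by
    have : 0 ≤ t0 - r := by linarith
    gcongr
    exact hr.1
  set X := ∫ s in (0:ℝ)..r, (r - s) ^ (α - 1) * mlV α L s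
  set Y := ∫ s in (0:ℝ)..r, (t0 - s) ^ (α - 1) * mlV α L s
  set Z := ∫ s in r..t0, (t0 - s) ^ (α - 1) * mlV α L s
  rw [← split] at V0
  have hGv : Real.Gamma α * mlV α L t0 ≤ 0 := mul_nonpos_of_nonneg_of_nonpos hG.le hv0
  have k1 : L * Y ≤ c * (r ^ (α - 1) - Real.Gamma α * mlV α L r) := by
    rw [Vr]
    calc L * Y ≤ L * (c * X) := by gcongr
      _ = _ := by ring
  have k2 : L * Z ≤ L * ((t0 - t1) ^ α / α) * mlV α L r := by
    calc L * Z ≤ L * ((t0 - t1) ^ α / α * mlV α L r) := by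
          gcongr
          exact Bb.trans (by gcongr)
      _ = _ := by ring
  have k3 : L * ((t0 - t1) ^ α / α) * mlV α L r < Real.Gamma α / 2 * mlV α L r := by gcongr
  have k4 : 1 / 2 * (Real.Gamma α * mlV α L r) ≤ c * (Real.Gamma α * mlV α L r) := by gcongr
  nlinarith

theorem mlE_nonneg {α L t : ℝ} (hα : 0 < α) (hα1 : α < 1) (hL : 0 < L) (ht : 0 < t) :
    0 ≤ mlE α (-L * t ^ α) := by
  rw [mlE_eq hα ht.le]
  have V := mlV_volterra (L := L) hα ht
  have hv := mlV_pos hα hα1 hL ht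
  have hG := Real.Gamma_pos_of_pos hα
  have A : t ^ (α - 1) * ∫ s in (0:ℝ)..t, mlV α L s ≤
      ∫ s in (0:ℝ)..t, (t - s) ^ (α - 1) * mlV α L s := by
    rw [← intervalIntegral.integral_const_mul]
    refine intervalIntegral.integral_mono_on_of_le_Ioo ht.le ((mlV_int_one hα ht).const_mul _)
      (mlV_int hα hα ht) ?_
    intro s hs
    refine mul_le_mul_of_nonneg_right ?_ (mlV_pos hα hα1 hL hs.1).le
    exact Real.rpow_le_rpow_of_nonpos (by linarith [hs.2]) (by linarith [hs.1]) (by linarith)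
  have hp : 0 < t ^ (α - 1) := by positivity
  have h1 : 0 < Real.Gamma α * mlV α L t := by positivity
  have h2 := mul_le_mul_of_nonneg_left A hL.le
  by_contra hcon
  push Not at hcon
  nlinarith [mul_neg_of_pos_of_neg hp hcon]

theorem mlE_hasDerivAt_s1 {α L t : ℝ} (hα : 0 < α) (ht : 0 < t) :
    HasDerivAt (fun t => mlE α (-L * t ^ α)) (-(L * mlV α L t)) t := by
  have hm : Measurable (mlV α L) := by
    have h2 : Continuous fun s : ℝ => s ^ α := Real.continuous_rpow_const hα.le
    have h3 := mlE2_continuous hα hα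
    have h4 : Continuous fun s : ℝ => mlE2 α α (-L * s ^ α) := by fun_prop
    exact (measurable_id.pow_const _).mul h4.measurable
  have h := intervalIntegral.integral_hasDerivAt_right (mlV_int_one (L := L) hα ht)
    (hm.stronglyMeasurable.stronglyMeasurableAtFilter) (mlV_continuousAt hα ht)
  have h2 := ((h.const_mul L).const_sub 1)
  refine h2.congr_of_eventuallyEq ?_
  filter_upwards [lt_mem_nhds ht] with s hs
  exact mlE_eq hα hs.le

theorem abc_deriv_nonpos_at_zero_from_above
    (T α B : ℝ) (hT : 0 < T) (hα : 0 < α) (hα1 : α < 1) (hB : 0 < B)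
    (m : ℝ → ℝ)
    (hmdiff : ∀ τ ∈ Set.Icc (0:ℝ) T, DifferentiableAt ℝ m τ)
    (hcont : ContinuousOn (abcD α B m) (Set.Icc (0:ℝ) T))
    (τ₀ : ℝ) (hτ₀ : τ₀ ∈ Set.Ioc (0:ℝ) T)
    (hm0 : m τ₀ = 0)
    (hpos : ∀ τ ∈ Set.Ico (0:ℝ) τ₀, 0 ≤ m τ) :
    abcD α B m τ₀ ≤ 0 := by
  unfold abcD
  have h1α : 0 < 1 - α := by linarith
  set L := α / (1 - α) with hLdef
  have hL : 0 < L := by positivity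
  refine mul_nonpos_of_nonneg_of_nonpos (by positivity) ?_
  by_cases hi : IntervalIntegrable
      (fun σ => mlE α (-L * (τ₀ - σ) ^ α) * deriv m σ) volume 0 τ₀
  swap
  · rw [intervalIntegral.integral_undef hi]
  have h0 := hτ₀.1
  have hmD : ∀ s ∈ Icc 0 τ₀, DifferentiableAt ℝ m s := fun s hs => hmdiff s ⟨hs.1, hs.2.trans hτ₀.2⟩
  have hgc : Continuous fun σ => mlE α (-L * (τ₀ - σ) ^ α) := by
    have h3 : Continuous (mlE α) := mlE2_continuous hα one_pos
    have h2 : Continuous fun σ : ℝ => (τ₀ - σ) ^ α :=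
      (Real.continuous_rpow_const hα.le).comp (by fun_prop)
    fun_prop
  have key := intervalIntegral.integral_le_sub_of_hasDeriv_right_of_le
    (g := fun σ => mlE α (-L * (τ₀ - σ) ^ α) * m σ)
    (g' := fun σ => L * mlV α L (τ₀ - σ) * m σ + mlE α (-L * (τ₀ - σ) ^ α) * deriv m σ)
    (φ := fun σ => mlE α (-L * (τ₀ - σ) ^ α) * deriv m σ) h0.le
    (hgc.continuousOn.mul fun s hs => (hmD s hs).continuousAt.continuousWithinAt)
    (fun s hs => by
      have d1 : HasDerivAt (fun σ => mlE α (-L * (τ₀ - σ) ^ α)) (L * mlV α L (τ₀ - s)) s := by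
        have := (mlE_hasDerivAt_s1 (L := L) hα (sub_pos.2 hs.2)).comp s
          ((hasDerivAt_id s).const_sub τ₀)
        simpa using! this
      exact (d1.mul (hmD s ⟨hs.1.le, hs.2.le⟩).hasDerivAt).hasDerivWithinAt)
    (by rwa [intervalIntegrable_iff_integrableOn_Icc_of_le h0.le] at hi)
    (fun s hs => by
      have a1 := mlV_pos hα hα1 hL (sub_pos.2 hs.2)
      have a2 := hpos s ⟨hs.1.le, hs.2⟩
      have : 0 ≤ L * mlV α L (τ₀ - s) * m s := by positivity
      linarith)
  refine key.trans ?_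
  have b1 := mlE_nonneg hα hα1 hL h0
  have b2 := hpos 0 ⟨le_rfl, h0⟩
  simp only [hm0, sub_zero, mul_zero, zero_sub]
  have := mul_nonneg b1 b2
  linarith
end

section
/- Let f : J → ℝ be differentiable on J with (^{ABC}D^α f) continuous on J. If f attains its maximum over J at a point τ₀ ∈ J, then (^{ABC}D^α f)(τ₀) ≥ 0. -/
open Filter Topology MeasureTheory Set

/-- coefficients of `(1-z)^(-s)` -/
noncomputable def rc (s : ℝ) (n : ℕ) : ℝ := ∏ i ∈ Finset.range n, (s + i) / (i + 1)

lemma rc_succ (s : ℝ) (n : ℕ) : ((n : ℝ) + 1) * rc s (n + 1) = (s + n) * rc s n := by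
  unfold rc
  rw [Finset.prod_range_succ]
  have : (n : ℝ) + 1 ≠ 0 := by positivity
  field_simp

lemma rc_zero (s : ℝ) : rc s 0 = 1 := by simp [rc]

lemma rc_conv (s t : ℝ) (n : ℕ) :
    ∑ p ∈ Finset.HasAntidiagonal.antidiagonal n, rc s p.1 * rc t p.2 = rc (s + t) n := by
  induction n with
  | zero => simp [rc_zero]
  | succ n ih =>
    have hn : (n : ℝ) + 1 ≠ 0 := by positivity
    apply mul_left_cancel₀ hn
    rw [rc_succ, ← ih, Finset.mul_sum, Finset.mul_sum]
    have h1 : ∑ p ∈ Finset.HasAntidiagonal.antidiagonal (n + 1), ((n : ℝ) + 1) * (rc s p.1 * rc t p.2)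
        = ∑ p ∈ Finset.HasAntidiagonal.antidiagonal (n + 1), ((p.1 : ℝ) * rc s p.1) * rc t p.2
          + ∑ p ∈ Finset.HasAntidiagonal.antidiagonal (n + 1), rc s p.1 * ((p.2 : ℝ) * rc t p.2) := by
      rw [← Finset.sum_add_distrib]
      apply Finset.sum_congr rfl
      intro p hp
      have : p.1 + p.2 = n + 1 := Finset.HasAntidiagonal.mem_antidiagonal.mp hp
      have h : (p.1 : ℝ) + p.2 = n + 1 := by exact_mod_cast this
      rw [← h]; ring
    rw [h1, Finset.Nat.sum_antidiagonal_succ, Finset.Nat.sum_antidiagonal_succ']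
    simp only [Nat.cast_zero, zero_mul, mul_zero, zero_add, add_zero, Nat.cast_add, Nat.cast_one,
      rc_succ]
    rw [← Finset.sum_add_distrib]
    apply Finset.sum_congr rfl
    intro p hp
    have : p.1 + p.2 = n := Finset.HasAntidiagonal.mem_antidiagonal.mp hp
    have h : (p.1 : ℝ) + p.2 = n := by exact_mod_cast this
    rw [← h]; ring

lemma rc_nonneg {s : ℝ} (hs : 0 ≤ s) (n : ℕ) : 0 ≤ rc s n := by
  unfold rc
  exact Finset.prod_nonneg fun i _ => by positivity

lemma rc_neg {α : ℝ} (h0 : 0 < α) (h1 : α < 1) (n : ℕ) : rc (-α) (n + 1) ≤ 0 := by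
  unfold rc
  rw [Finset.prod_range_succ']
  apply mul_nonpos_of_nonneg_of_nonpos
  · refine Finset.prod_nonneg fun i _ => ?_
    have : (0:ℝ) ≤ i := by positivity
    push_cast
    apply div_nonneg <;> linarith
  · simp; linarith

/-- positivity of solutions of `(D + l) v = a`. -/
lemma conv_pos {α l : ℝ} (h0 : 0 < α) (h1 : α < 1) (hl : 0 ≤ l) (v : ℕ → ℝ)
    (h : ∀ n, 0 ≤ ∑ p ∈ Finset.HasAntidiagonal.antidiagonal n, rc (-α) p.1 * v p.2 + l * v n) (n : ℕ) :
    0 ≤ v n := by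
  induction n using Nat.strong_induction_on with
  | _ n ih =>
    have hn := h n
    cases n with
    | zero =>
      simp [rc_zero] at hn
      nlinarith
    | succ n =>
      rw [Finset.Nat.sum_antidiagonal_succ, rc_zero] at hn
      have : ∑ p ∈ Finset.HasAntidiagonal.antidiagonal n, rc (-α) (p.1 + 1) * v p.2 ≤ 0 := by
        apply Finset.sum_nonpos
        intro p hp
        have : p.1 + p.2 = n := Finset.HasAntidiagonal.mem_antidiagonal.mp hp
        exact mul_nonpos_of_nonpos_of_nonneg (rc_neg h0 h1 _) (ih _ (by omega))
      simp only at hn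
      nlinarith

noncomputable def vv (α l : ℝ) (n : ℕ) : ℝ := ∑' k : ℕ, (-l) ^ k * rc (α * k + 1) n

lemma rc_le_poly {a : ℝ} (ha : 0 ≤ a) (n : ℕ) : rc (a + 1) n ≤ (a + 1) ^ n := by
  unfold rc
  rw [← Finset.card_range n, ← Finset.prod_const, Finset.card_range]
  apply Finset.prod_le_prod
  · intro i _; positivity
  · intro i _
    rw [div_le_iff₀ (by positivity)]
    have : (0:ℝ) ≤ i := by positivity
    nlinarith [mul_nonneg ha this]

lemma summable_poly {r : ℝ} (hr0 : 0 ≤ r) (hr : r < 1) (n : ℕ) :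
    Summable fun k : ℕ => ((k : ℝ) + 1) ^ n * r ^ k := by
  rcases hr0.eq_or_lt with rfl | hr0
  · apply summable_of_ne_finset_zero (s := {0})
    intro b hb
    have : b ≠ 0 := by simpa using hb
    simp [this]
  have h := summable_pow_mul_geometric_of_norm_lt_one (R := ℝ) n (r := r)
    (by rw [Real.norm_eq_abs, abs_of_pos hr0]; exact hr)
  have h2 := ((summable_nat_add_iff 1).mpr h).mul_right r⁻¹
  refine h2.congr fun k => ?_
  push_cast
  rw [pow_succ]
  field_simp

lemma vv_summable {α l : ℝ} (h0 : 0 < α) (h1 : α < 1) (hl : 0 ≤ l) (hl1 : l < 1) (n : ℕ) :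
    Summable fun k : ℕ => (-l) ^ k * rc (α * k + 1) n := by
  refine Summable.of_norm_bounded (summable_poly hl hl1 n) fun k => ?_
  have hk : 0 ≤ α * k := by positivity
  rw [norm_mul, norm_pow, norm_neg, Real.norm_eq_abs, Real.norm_eq_abs, abs_of_nonneg hl,
    abs_of_nonneg (rc_nonneg (by linarith) n), mul_comm]
  gcongr
  refine (rc_le_poly hk n).trans ?_
  gcongr
  have : (0:ℝ) ≤ k := by positivity
  nlinarith

lemma vv_eq {α l : ℝ} (h0 : 0 < α) (h1 : α < 1) (hl : 0 ≤ l) (hl1 : l < 1) (n : ℕ) :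
    ∑ p ∈ Finset.HasAntidiagonal.antidiagonal n, rc (-α) p.1 * vv α l p.2 + l * vv α l n = rc (1 - α) n := by
  have hs := vv_summable h0 h1 hl hl1
  have hv : ∀ m, HasSum (fun k : ℕ => (-l) ^ k * rc (α * k + 1) m) (vv α l m) :=
    fun m => (hs m).hasSum
  have h2 : ∀ k : ℕ, ∑ p ∈ Finset.HasAntidiagonal.antidiagonal n,
      rc (-α) p.1 * ((-l) ^ k * rc (α * k + 1) p.2) = (-l) ^ k * rc (α * k + 1 - α) n := by
    intro k
    have : α * k + 1 - α = -α + (α * k + 1) := by ring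
    rw [this, ← rc_conv, Finset.mul_sum]
    exact Finset.sum_congr rfl fun p _ => by ring
  have H1 : HasSum (fun k : ℕ => (-l) ^ k * rc (α * k + 1 - α) n)
      (∑ p ∈ Finset.HasAntidiagonal.antidiagonal n, rc (-α) p.1 * vv α l p.2) := by
    have := hasSum_sum (s := Finset.HasAntidiagonal.antidiagonal n)
      (fun p _ => (hv p.2).mul_left (rc (-α) p.1))
    simp only [h2] at this
    exact this
  have h3 : ∀ k : ℕ, (-l) ^ (k + 1) * rc (α * ((k + 1 : ℕ) : ℝ) + 1 - α) n
     = (-l) * ((-l) ^ k * rc (α * k + 1) n) := by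
    intro k
    have : α * ((k + 1 : ℕ) : ℝ) + 1 - α = α * k + 1 := by push_cast; ring
    rw [this]; ring
  have H2 : HasSum (fun k : ℕ => (-l) ^ (k + 1) * rc (α * ((k + 1 : ℕ) : ℝ) + 1 - α) n)
      ((-l) * vv α l n) := by
    simp only [h3]
    exact (hv n).mul_left (-l)
  have H3 := H1.unique ((hasSum_nat_add_iff' 1).1 (by simpa using H2) : HasSum _ ((-l) * vv α l n + rc (1 - α) n))
  linarith

lemma vv_nonneg {α l : ℝ} (h0 : 0 < α) (h1 : α < 1) (hl : 0 ≤ l) (hl1 : l < 1) (n : ℕ) :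
    0 ≤ vv α l n := by
  refine conv_pos h0 h1 hl _ (fun n => ?_) n
  rw [vv_eq h0 h1 hl hl1]
  exact rc_nonneg (by linarith) n

lemma vv_anti {α l m : ℝ} (h0 : 0 < α) (h1 : α < 1) (hl : 0 ≤ l) (hlm : l ≤ m) (hm1 : m < 1) (n : ℕ) :
    vv α m n ≤ vv α l n := by
  rw [← sub_nonneg]
  refine conv_pos (v := fun n => vv α l n - vv α m n) h0 h1 (hl.trans hlm) (fun n => ?_) n
  have e1 := vv_eq h0 h1 hl (hlm.trans_lt hm1) n
  have e2 := vv_eq h0 h1 (hl.trans hlm) hm1 n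
  simp_rw [mul_sub, Finset.sum_sub_distrib]
  have := mul_nonneg (sub_nonneg.2 hlm) (vv_nonneg h0 h1 hl (hlm.trans_lt hm1) n)
  linarith

lemma rc_bound {a : ℝ} (ha : 0 ≤ a) {J n : ℕ} (hJ : 1 ≤ J) (hn : J ≤ n) :
    rc (a + 1) n ≤ (a + 1) ^ J * ((n : ℝ) / J) ^ a := by
  have hJ0 : (0:ℝ) < J := by exact_mod_cast hJ
  induction n, hn using Nat.le_induction with
  | base => rw [div_self hJ0.ne', Real.one_rpow, mul_one]; exact rc_le_poly ha J
  | succ n hn ih =>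
    have hn0 : (0:ℝ) < n := by exact_mod_cast (by omega : 0 < n)
    have e : rc (a + 1) (n + 1) = rc (a + 1) n * (1 + a / (n + 1)) := by
      apply mul_left_cancel₀ (by positivity : (n : ℝ) + 1 ≠ 0)
      rw [rc_succ]; field_simp; ring
    have key : 1 + a / (n + 1) ≤ (((n : ℝ) + 1) / n) ^ a := by
      calc 1 + a / (n + 1) ≤ Real.exp (a / (n + 1)) := by
            linarith [Real.add_one_le_exp (a / ((n : ℝ) + 1))]
        _ = (Real.exp (1 / (n + 1))) ^ a := by
            rw [← Real.exp_mul]; congr 1; ring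
        _ ≤ _ := by
            gcongr
            have := Real.add_one_le_exp (-(1 / ((n : ℝ) + 1)))
            rw [Real.exp_neg] at this
            have h3 : -(1 / ((n : ℝ) + 1)) + 1 = n / (n + 1) := by field_simp; ring
            rw [h3] at this
            have h4 := inv_anti₀ (by positivity) this
            rwa [inv_inv, inv_div] at h4
    rw [e]
    calc _ ≤ ((a + 1) ^ J * ((n : ℝ) / J) ^ a) * (((n : ℝ) + 1) / n) ^ a := by
          gcongr
      _ = _ := by
          rw [mul_assoc, ← Real.mul_rpow (by positivity) (by positivity)]
          congr 2
          push_cast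
          field_simp

lemma rc_tendsto {a : ℝ} (ha : 0 ≤ a) :
    Tendsto (fun n : ℕ => rc (a + 1) n / (n : ℝ) ^ a) atTop (𝓝 (1 / Real.Gamma (a + 1))) := by
  rcases ha.eq_or_lt with rfl | ha
  · have : ∀ n, rc 1 n = 1 := by
      intro n; unfold rc
      apply Finset.prod_eq_one
      intro i _
      rw [add_comm]; exact div_self (by positivity)
    simp [this]
  · have h := ((Real.GammaSeq_tendsto_Gamma a).const_mul a).inv₀
      (mul_ne_zero ha.ne' (Real.Gamma_pos_of_pos ha).ne')
    rw [Real.Gamma_add_one ha.ne', one_div]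
    refine h.congr fun n => ?_
    unfold Real.GammaSeq rc
    rw [Finset.prod_range_succ', Finset.prod_div_distrib]
    have : (∏ i ∈ Finset.range n, ((i : ℝ) + 1)) = (n.factorial : ℝ) := by
      rw [← Finset.prod_range_add_one_eq_factorial]; push_cast; rfl
    rw [this]
    have e : ∏ k ∈ Finset.range n, (a + ((k + 1 : ℕ) : ℝ)) = ∏ k ∈ Finset.range n, (a + 1 + (k : ℝ)) :=
      Finset.prod_congr rfl fun i _ => by push_cast; ring
    rw [e]
    have hf : (n.factorial : ℝ) ≠ 0 := by positivity
    have hp : ∏ k ∈ Finset.range n, (a + 1 + (k : ℝ)) ≠ 0 := by positivity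
    simp only [Nat.cast_zero, add_zero]
    by_cases hz : (n : ℝ) ^ a = 0
    · simp [hz]
    field_simp

lemma vv_tendsto {α x : ℝ} (h0 : 0 < α) (h1 : α < 1) (hx : 0 ≤ x) :
    Tendsto (fun n : ℕ => vv α (x / (n : ℝ) ^ α) n) atTop (𝓝 (mlE α (-x))) := by
  have ht : Tendsto (fun n : ℕ => (n : ℝ) ^ α) atTop atTop :=
    (tendsto_rpow_atTop h0).comp tendsto_natCast_atTop_atTop
  obtain ⟨J, hJx, hJ⟩ := ((ht.eventually_gt_atTop x).and (eventually_ge_atTop 1)).exists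
  have hJ0 : (0:ℝ) < J := by exact_mod_cast hJ
  have hJa : 0 < (J:ℝ) ^ α := by positivity
  unfold vv mlE
  refine tendsto_tsum_of_dominated_convergence
    (bound := fun k : ℕ => ((k : ℝ) + 1) ^ J * (x / (J : ℝ) ^ α) ^ k)
    (summable_poly (by positivity) ((div_lt_one hJa).2 hJx) J) ?_ ?_
  · intro k
    have h := (rc_tendsto (a := α * k) (by positivity)).const_mul ((-x) ^ k)
    rw [mul_one_div, mul_comm α] at h
    refine h.congr fun n => ?_
    rw [mul_comm (k : ℝ), ← neg_div, div_pow, ← Real.rpow_mul_natCast (by positivity)]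
    ring
  · filter_upwards [eventually_ge_atTop J] with n hn k
    have hn0 : (0:ℝ) < n := by exact_mod_cast (by omega : 0 < n)
    have hk : 0 ≤ α * k := by positivity
    rw [norm_mul, norm_pow, norm_neg, Real.norm_eq_abs, Real.norm_eq_abs,
      abs_of_nonneg (by positivity), abs_of_nonneg (rc_nonneg (by linarith) n)]
    calc (x / (n:ℝ) ^ α) ^ k * rc (α * k + 1) n
        ≤ (x / (n:ℝ) ^ α) ^ k * ((α * k + 1) ^ J * ((n : ℝ) / J) ^ (α * k)) := by
          gcongr
          exact rc_bound hk hJ hn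
      _ = (α * k + 1) ^ J * (x / (J : ℝ) ^ α) ^ k := by
          rw [Real.rpow_mul_natCast (by positivity), Real.div_rpow hn0.le hJ0.le, div_pow, div_pow, div_pow]
          have : (n:ℝ) ^ α ≠ 0 := by positivity
          field_simp
      _ ≤ _ := by
          gcongr
          have : (0:ℝ) ≤ k := by positivity
          nlinarith

lemma mlE_nonneg_s2 {α x : ℝ} (h0 : 0 < α) (h1 : α < 1) (hx : 0 ≤ x) : 0 ≤ mlE α (-x) := by
  have ht : Tendsto (fun n : ℕ => (n : ℝ) ^ α) atTop atTop :=
    (tendsto_rpow_atTop h0).comp tendsto_natCast_atTop_atTop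
  refine ge_of_tendsto (vv_tendsto h0 h1 hx) ?_
  filter_upwards [ht.eventually_gt_atTop x] with n hn
  exact vv_nonneg h0 h1 (by positivity) ((div_lt_one (by linarith)).2 hn) n

lemma mlE_anti {α x y : ℝ} (h0 : 0 < α) (h1 : α < 1) (hx : 0 ≤ x) (hxy : x ≤ y) :
    mlE α (-y) ≤ mlE α (-x) := by
  have ht : Tendsto (fun n : ℕ => (n : ℝ) ^ α) atTop atTop :=
    (tendsto_rpow_atTop h0).comp tendsto_natCast_atTop_atTop
  refine le_of_tendsto_of_tendsto (vv_tendsto h0 h1 (hx.trans hxy)) (vv_tendsto h0 h1 hx) ?_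
  filter_upwards [ht.eventually_gt_atTop y] with n hn
  exact vv_anti h0 h1 (by positivity) (by gcongr) ((div_lt_one (by linarith)).2 hn) n

lemma integral_nonneg_of_mono {b : ℝ} (hb : 0 ≤ b) (f K : ℝ → ℝ)
    (hf : ∀ t ∈ Icc (0:ℝ) b, DifferentiableAt ℝ f t) (hmax : ∀ t ∈ Icc (0:ℝ) b, f t ≤ f b)
    (hK0 : ∀ t, 0 ≤ K t) (hK : Monotone K) (hKb : ∀ t, K t ≤ K b) :
    0 ≤ ∫ s in (0:ℝ)..b, K s * deriv f s := by
  by_cases hint : IntervalIntegrable (fun s => K s * deriv f s) volume 0 b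
  swap
  · rw [intervalIntegral.integral_undef hint]
  rw [intervalIntegral.integral_of_le hb]
  rw [intervalIntegrable_iff_integrableOn_Ioc_of_le hb] at hint
  set μ := volume.restrict (Ioc (0:ℝ) b)
  set ν := volume.restrict (Ioc (0:ℝ) (K b))
  set S : Set (ℝ × ℝ) := {p | p.2 < K p.1}
  have hS : MeasurableSet S := measurableSet_lt measurable_snd (hK.measurable.comp measurable_fst)
  have hind : ∀ s, Integrable (fun t => (Iio (K s)).indicator (fun _ => (1:ℝ)) t) ν := by
    intro s
    exact (integrable_const (1:ℝ)).indicator measurableSet_Iio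
  have hval : ∀ s, ∫ t, (Iio (K s)).indicator (fun _ => (1:ℝ)) t ∂ν = K s := by
    intro s
    rw [integral_indicator measurableSet_Iio, Measure.restrict_restrict measurableSet_Iio]
    have : Iio (K s) ∩ Ioc 0 (K b) = Ioo 0 (K s) := by
      ext t; simp only [mem_inter_iff, mem_Iio, mem_Ioc, mem_Ioo]
      have := hKb s
      constructor
      · rintro ⟨h1, h2, h3⟩; exact ⟨h2, h1⟩
      · rintro ⟨h1, h2⟩; exact ⟨h2, h1, by linarith⟩
    rw [this]
    simp [hK0 s]
  set F : ℝ → ℝ → ℝ := fun s t => (Iio (K s)).indicator (fun _ => (1:ℝ)) t * deriv f s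
  have hFe : Function.uncurry F = fun p => S.indicator (fun _ => (1:ℝ)) p * deriv f p.1 := by
    ext p
    simp only [F, Function.uncurry, S, indicator, mem_Iio, mem_ofPred_eq]
  have hFm : Measurable (Function.uncurry F) := by
    rw [hFe]
    exact (measurable_const.indicator hS).mul ((measurable_deriv f).comp measurable_fst)
  have hnorm : ∀ s, ∫ t, ‖F s t‖ ∂ν = ‖K s * deriv f s‖ := by
    intro s
    have : ∀ t, ‖F s t‖ = (Iio (K s)).indicator (fun _ => (1:ℝ)) t * ‖deriv f s‖ := by
      intro t
      simp only [F, norm_mul]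
      congr 1
      exact Real.norm_of_nonneg (indicator_nonneg (fun _ _ => zero_le_one) _)
    simp_rw [this]
    rw [integral_mul_const, hval, norm_mul, Real.norm_of_nonneg (hK0 s)]
  have hFi : Integrable (Function.uncurry F) (μ.prod ν) := by
    rw [integrable_prod_iff hFm.aestronglyMeasurable]
    refine ⟨Eventually.of_forall fun s => (hind s).mul_const (deriv f s), ?_⟩
    simp only [Function.uncurry]
    simp_rw [hnorm]
    exact hint.norm
  have e : ∫ s, K s * deriv f s ∂μ = ∫ s, ∫ t, F s t ∂ν ∂μ := by
    congr 1; ext s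
    simp only [F]
    rw [integral_mul_const, hval]
  rw [e, integral_integral_swap hFi]
  apply setIntegral_nonneg measurableSet_Ioc
  intro t ht
  have hU : MeasurableSet {s | t < K s} := measurableSet_lt measurable_const hK.measurable
  have e2 : ∀ s, F s t = {s | t < K s}.indicator (deriv f) s := by
    intro s
    simp only [F, indicator, mem_Iio, mem_ofPred_eq]
    split_ifs <;> simp
  simp_rw [e2]
  rw [integral_indicator hU, Measure.restrict_restrict hU]
  set A := {s | t < K s} ∩ Ioc 0 b
  have hAm : MeasurableSet A := hU.inter measurableSet_Ioc
  rcases A.eq_empty_or_nonempty with hA | hA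
  · rw [hA]; simp
  have hbd : BddBelow A := ⟨0, fun s hs => hs.2.1.le⟩
  set c := sInf A
  have hc0 : 0 ≤ c := le_csInf hA fun s hs => hs.2.1.le
  have hcb : c ≤ b := by
    obtain ⟨s, hs⟩ := hA
    exact (csInf_le hbd hs).trans hs.2.2
  have hsub1 : Ioc c b ⊆ A := by
    intro s hs
    obtain ⟨r, hr, hrs⟩ := exists_lt_of_csInf_lt hA hs.1
    exact ⟨lt_of_lt_of_le hr.1 (hK hrs.le), hr.2.1.trans hrs, hs.2⟩
  have hsub2 : A ⊆ Icc c b := fun s hs => ⟨csInf_le hbd hs, hs.2.2⟩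
  have hae : A =ᵐ[volume] Ioc c b := by
    apply Filter.EventuallyLE.antisymm
    · exact (LE.le.eventuallyLE hsub2).trans Ioc_ae_eq_Icc.symm.le
    · exact LE.le.eventuallyLE hsub1
  have hfi : IntegrableOn (deriv f) (Ioc c b) := by
    have h1 : IntegrableOn (fun s => t⁻¹ * (K s * deriv f s)) (Ioc c b) :=
      (hint.mono_set (Ioc_subset_Ioc_left hc0)).const_mul t⁻¹
    refine Integrable.mono h1 (measurable_deriv f).aestronglyMeasurable ?_
    refine (ae_restrict_iff' measurableSet_Ioc).2 (Eventually.of_forall fun s hs => ?_)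
    have h2 : t < K s := (hsub1 hs).1
    have ht0 := ht.1
    rw [← mul_assoc, norm_mul]
    apply le_mul_of_one_le_left (norm_nonneg _)
    rw [Real.norm_of_nonneg (mul_nonneg (inv_nonneg.2 ht0.le) (hK0 s)), inv_mul_eq_div, one_le_div ht0]
    exact h2.le
  rw [setIntegral_congr_set hae, ← intervalIntegral.integral_of_le hcb,
    intervalIntegral.integral_eq_sub_of_hasDerivAt (f := f)]
  · linarith [hmax c ⟨hc0, hcb⟩]
  · intro s hs
    rw [uIcc_of_le hcb] at hs
    exact (hf s ⟨hc0.trans hs.1, hs.2⟩).hasDerivAt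
  · exact (intervalIntegrable_iff_integrableOn_Ioc_of_le hcb).2 hfi

theorem abc_deriv_nonneg_at_max
    (T α B : ℝ) (hT : 0 < T) (hα : 0 < α) (hα1 : α < 1) (hB : 0 < B)
    (f : ℝ → ℝ)
    (hfdiff : ∀ τ ∈ Set.Icc (0:ℝ) T, DifferentiableAt ℝ f τ)
    (hcont : ContinuousOn (abcD α B f) (Set.Icc (0:ℝ) T))
    (τ₀ : ℝ) (hτ₀ : τ₀ ∈ Set.Icc (0:ℝ) T)
    (hmax : ∀ τ ∈ Set.Icc (0:ℝ) T, f τ ≤ f τ₀) :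
    0 ≤ abcD α B f τ₀ := by
  unfold abcD
  have h1 : 0 < 1 - α := by linarith
  apply mul_nonneg (by positivity)
  have hc : 0 ≤ α / (1 - α) := by positivity
  have h := integral_nonneg_of_mono hτ₀.1 f
    (fun σ => mlE α (-((α / (1 - α)) * (max (τ₀ - σ) 0) ^ α)))
    (fun t ht => hfdiff t ⟨ht.1, ht.2.trans hτ₀.2⟩) (fun t ht => hmax t ⟨ht.1, ht.2.trans hτ₀.2⟩)
    (fun t => mlE_nonneg_s2 hα hα1 (by positivity))
    (fun s t hst => mlE_anti hα hα1 (by positivity) (by gcongr))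
    (fun t => mlE_anti hα hα1 (by positivity) (by
      rw [sub_self, max_self]
      gcongr
      exact le_max_right _ _))
  refine h.trans_eq (intervalIntegral.integral_congr fun s hs => ?_)
  rw [uIcc_of_le hτ₀.1] at hs
  simp only [max_eq_left (sub_nonneg.2 hs.2), neg_mul]
end

section
/- Let ω₀ ∈ ℝ, b > 0, and let R₀ = { (τ, ω) : τ ∈ J, |ω − ω₀| ≤ b }. Let f : J × ℝ → ℝ be continuous with |f(τ, ω)| ≤ M for all (τ, ω) ∈ R₀, satisfying |f(τ₁, ω) − f(τ₂, η)| ≤ L₁|τ₁ − τ₂| + L₂|ω − η| for all τ₁, τ₂ ∈ J and ω, η ∈ ℝ, with L₁ > 0 and 0 < L₂ < B(α)/(1−α), and with f(0, ω₀) = 0. If M(1−α) < b·B(α), then, setting β = min{ T, ( Γ(α)(b·B(α) − M(1−α)) / M )^{1/α} }, there exists a continuous function ω : [0,β] → ℝ with ω(0) = ω₀ and |ω(τ) − ω₀| ≤ b for all τ ∈ [0,β] that solves the ABC integral equation on [0,β]. -/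
lemma abc_kernel_int (α τ : ℝ) (hα : 0 < α) (g : ℝ → ℝ) (hg : Continuous g) :
    IntervalIntegrable (fun σ => (τ - σ) ^ (α - 1) * g σ) MeasureTheory.volume 0 τ := by
  have h1 : IntervalIntegrable (fun x : ℝ => x ^ (α - 1)) MeasureTheory.volume τ 0 :=
    intervalIntegral.intervalIntegrable_rpow' (by linarith)
  have h2 := h1.comp_sub_left τ
  simp only [sub_self, sub_zero] at h2
  exact h2.mul_continuousOn hg.continuousOn

lemma abc_scale (α τ : ℝ) (hα : 0 < α) (hτ : 0 ≤ τ) (g : ℝ → ℝ) :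
    ∫ σ in (0:ℝ)..τ, (τ - σ) ^ (α - 1) * g σ
      = τ ^ α * ∫ r in (0:ℝ)..1, (1 - r) ^ (α - 1) * g (τ * r) := by
  rcases hτ.eq_or_lt with h | h
  · subst h
    simp [Real.zero_rpow hα.ne']
  · have h1 := intervalIntegral.mul_integral_comp_mul_left (a := 0) (b := 1)
      (f := fun σ => (τ - σ) ^ (α - 1) * g σ) τ
    rw [mul_zero, mul_one] at h1
    rw [← h1]
    have h2 : τ ^ α = τ * τ ^ (α - 1) := by
      rw [Real.rpow_sub_one h.ne']; field_simp
    rw [h2, mul_assoc, ← intervalIntegral.integral_const_mul (τ ^ (α - 1))]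
    congr 1
    apply intervalIntegral.integral_congr
    intro r hr
    rw [Set.uIcc_of_le zero_le_one] at hr
    have h3 : (τ - τ * r) = τ * (1 - r) := by ring
    simp only
    rw [h3, Real.mul_rpow h.le (by linarith [hr.2])]
    ring

lemma abc_cont (α C : ℝ) (hα : 0 < α) (g : ℝ → ℝ) (hg : Continuous g)
    (hC : ∀ x, |g x| ≤ C) :
    Continuous (fun τ : ℝ => τ ^ α * ∫ r in (0:ℝ)..1, (1 - r) ^ (α - 1) * g (τ * r)) := by
  refine (continuous_id.rpow_const (fun x => Or.inr hα.le)).mul ?_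
  have hb := abc_kernel_int α 1 hα (fun _ => C) continuous_const
  refine intervalIntegral.continuous_of_dominated_interval
    (bound := fun r => (1 - r) ^ (α - 1) * C) ?_ ?_ hb ?_
  · intro x
    have := abc_kernel_int α 1 hα (fun r => g (x * r)) (by fun_prop)
    rw [Set.uIoc_of_le zero_le_one]
    exact this.1.aestronglyMeasurable
  · intro x
    refine Filter.Eventually.of_forall fun t ht => ?_
    rw [Set.uIoc_of_le zero_le_one] at ht
    have : 0 ≤ (1 - t) ^ (α - 1) := Real.rpow_nonneg (by linarith [ht.2]) _
    rw [norm_mul, Real.norm_of_nonneg this]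
    exact mul_le_mul_of_nonneg_left (hC _) this
  · refine Filter.Eventually.of_forall fun t ht => ?_
    fun_prop

lemma abc_bound (α τ : ℝ) (hα : 0 < α) (hτ : 0 ≤ τ) (g h : ℝ → ℝ) (hh : Continuous h)
    (hgh : ∀ σ ∈ Set.Icc 0 τ, |g σ| ≤ h σ) :
    |∫ σ in (0:ℝ)..τ, (τ - σ) ^ (α - 1) * g σ| ≤ ∫ σ in (0:ℝ)..τ, (τ - σ) ^ (α - 1) * h σ := by
  rw [← Real.norm_eq_abs]
  refine intervalIntegral.norm_integral_le_of_norm_le hτ ?_ (abc_kernel_int α τ hα h hh)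
  refine Filter.Eventually.of_forall fun t ht => ?_
  have : 0 ≤ (τ - t) ^ (α - 1) := Real.rpow_nonneg (by linarith [ht.2]) _
  rw [norm_mul, Real.norm_of_nonneg this]
  exact mul_le_mul_of_nonneg_left (hgh _ ⟨ht.1.le, ht.2⟩) this

lemma abc_bound_const (α τ M : ℝ) (hα : 0 < α) (hτ : 0 ≤ τ) (g : ℝ → ℝ)
    (hg : ∀ σ ∈ Set.Icc 0 τ, |g σ| ≤ M) :
    |∫ σ in (0:ℝ)..τ, (τ - σ) ^ (α - 1) * g σ| ≤ τ ^ α / α * M := by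
  refine (abc_bound α τ hα hτ g (fun _ => M) continuous_const hg).trans (le_of_eq ?_)
  rw [intervalIntegral.integral_mul_const,
    intervalIntegral.integral_comp_sub_left (fun x : ℝ => x ^ (α - 1)) τ,
    integral_rpow (Or.inl (by linarith))]
  simp [Real.zero_rpow hα.ne']

lemma abc_bound_exp (α τ D l : ℝ) (hα : 0 < α) (hτ : 0 ≤ τ) (hD : 0 ≤ D) (hl : 0 < l) (g : ℝ → ℝ)
    (hg : ∀ σ ∈ Set.Icc 0 τ, |g σ| ≤ D * Real.exp (l * σ)) :
    |∫ σ in (0:ℝ)..τ, (τ - σ) ^ (α - 1) * g σ| ≤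
      D * Real.exp (l * τ) * (l ^ (-α) * Real.Gamma α) := by
  refine (abc_bound α τ hα hτ g _ (by fun_prop) hg).trans ?_
  have e1 : ∀ σ, (τ - σ) ^ (α - 1) * (D * Real.exp (l * σ)) =
      (fun s => (D * Real.exp (l * τ)) * (s ^ (α - 1) * Real.exp (-(l * s)))) (τ - σ) := by
    intro σ
    have : Real.exp (l * σ) = Real.exp (l * τ) * Real.exp (-(l * (τ - σ))) := by
      rw [← Real.exp_add]; congr 1; ring
    simp only
    rw [this]; ring
  rw [intervalIntegral.integral_congr (fun σ _ => e1 σ)]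
  rw [intervalIntegral.integral_comp_sub_left (fun s => (D * Real.exp (l * τ)) * (s ^ (α - 1) * Real.exp (-(l * s)))) τ, sub_self, sub_zero,
    intervalIntegral.integral_const_mul]
  refine mul_le_mul_of_nonneg_left ?_ (by positivity)
  have e2 := Real.integral_rpow_mul_exp_neg_mul_Ioi hα hl
  rw [one_div, Real.inv_rpow hl.le, ← Real.rpow_neg hl.le] at e2
  rw [← e2, intervalIntegral.integral_of_le hτ]
  have hi := integrableOn_rpow_mul_exp_neg_mul_rpow (p := 1) (s := α - 1) (b := l)
    (by linarith) one_pos hl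
  simp only [Real.rpow_one, neg_mul] at hi
  refine MeasureTheory.setIntegral_mono_set hi ?_ Set.Ioc_subset_Ioi_self.eventuallyLE
  refine (MeasureTheory.ae_restrict_iff' measurableSet_Ioi).2 (Filter.Eventually.of_forall ?_)
  intro x hx
  have : (0:ℝ) < x := hx
  simp only [Pi.zero_apply]
  positivity

theorem abc_local_existence
    (T α B M L₁ L₂ ω₀ b β : ℝ)
    (hT : 0 < T) (hα : 0 < α) (hα1 : α < 1) (hB : 0 < B) (hb : 0 < b)
    (f : ℝ → ℝ → ℝ)
    (hf : ContinuousOn (fun p : ℝ × ℝ => f p.1 p.2) (Set.Icc (0:ℝ) T ×ˢ Set.univ))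
    (hM : ∀ τ ∈ Set.Icc (0:ℝ) T, ∀ x : ℝ, |x - ω₀| ≤ b → |f τ x| ≤ M)
    (hL₁ : 0 < L₁) (hL₂ : 0 < L₂) (hL₂' : L₂ < B / (1 - α))
    (hLip : ∀ τ₁ ∈ Set.Icc (0:ℝ) T, ∀ τ₂ ∈ Set.Icc (0:ℝ) T, ∀ x y : ℝ,
      |f τ₁ x - f τ₂ y| ≤ L₁ * |τ₁ - τ₂| + L₂ * |x - y|)
    (hf0 : f 0 ω₀ = 0)
    (hsmall : M * (1 - α) < b * B)
    (hβ : β = min T ((Real.Gamma α * (b * B - M * (1 - α)) / M) ^ (1 / α))) :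
    ∃ ω : ℝ → ℝ, ContinuousOn ω (Set.Icc (0:ℝ) β) ∧ ω 0 = ω₀ ∧
      (∀ τ ∈ Set.Icc (0:ℝ) β, |ω τ - ω₀| ≤ b) ∧
      ∀ τ ∈ Set.Icc (0:ℝ) β,
        ω τ = ω₀ + (1 - α) / B * f τ (ω τ) +
          α / (B * Real.Gamma α) *
            ∫ σ in (0:ℝ)..τ, (τ - σ) ^ (α - 1) * f σ (ω σ) := by
  have hM0 : 0 ≤ M := (abs_nonneg _).trans (hM 0 ⟨le_rfl, hT.le⟩ ω₀ (by simpa using hb.le))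
  have hG : 0 < Real.Gamma α := Real.Gamma_pos_of_pos hα
  have hX : 0 ≤ Real.Gamma α * (b * B - M * (1 - α)) / M :=
    div_nonneg (mul_nonneg hG.le (by linarith)) hM0
  have hβ0 : 0 ≤ β := by
    rw [hβ]; exact le_min hT.le (Real.rpow_nonneg hX _)
  have hβT : β ≤ T := by rw [hβ]; exact min_le_left _ _
  have hβM : ∀ τ ∈ Set.Icc (0:ℝ) β, τ ^ α * M ≤ Real.Gamma α * (b * B - M * (1 - α)) := by
    intro τ hτ
    rcases hM0.eq_or_lt with h | h
    · rw [← h]; simp; positivity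
    · have h1 : τ ≤ (Real.Gamma α * (b * B - M * (1 - α)) / M) ^ (1 / α) :=
        hτ.2.trans (by rw [hβ]; exact min_le_right _ _)
      have h2 := Real.rpow_le_rpow hτ.1 h1 hα.le
      rw [← Real.rpow_mul hX, one_div_mul_cancel hα.ne', Real.rpow_one] at h2
      exact (le_div_iff₀ h).1 h2
  have h1α : 0 < 1 - α := by linarith
  obtain ⟨c, hc⟩ : ∃ c, c = (1 - α) / B := ⟨_, rfl⟩
  obtain ⟨k, hk⟩ : ∃ k, k = α / (B * Real.Gamma α) := ⟨_, rfl⟩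
  have hc0 : 0 < c := by rw [hc]; positivity
  have hk0 : 0 < k := by rw [hk]; positivity
  have hcL : c * L₂ < 1 := by
    rw [lt_div_iff₀ h1α] at hL₂'
    rw [hc, div_mul_eq_mul_div, div_lt_one hB]; linarith
  rw [← hc, ← hk]
  -- choose l
  obtain ⟨l, hl, hq⟩ : ∃ l : ℝ, 0 < l ∧
      c * L₂ + k * (L₂ * (l ^ (-α) * Real.Gamma α)) < 1 := by
    have t : Filter.Tendsto (fun l : ℝ => c * L₂ + k * (L₂ * (l ^ (-α) * Real.Gamma α)))
        Filter.atTop (nhds (c * L₂ + k * (L₂ * (0 * Real.Gamma α)))) :=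
      ((((tendsto_rpow_neg_atTop hα).mul_const _).const_mul _).const_mul _).const_add _
    have := (t.eventually_lt_const (by simpa using hcL)).and (Filter.eventually_gt_atTop 0)
    obtain ⟨l, h1, h2⟩ := this.exists
    exact ⟨l, h2, h1⟩
  obtain ⟨q, hqd⟩ : ∃ q, q = c * L₂ + k * (L₂ * (l ^ (-α) * Real.Gamma α)) := ⟨_, rfl⟩
  rw [← hqd] at hq
  have hq0 : 0 ≤ q := by rw [hqd]; positivity
  -- superposition
  let G : C(Set.Icc (0:ℝ) β, ℝ) → C(Set.Icc (0:ℝ) β, ℝ) := fun u =>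
    ⟨fun t => f t (Real.exp (l * t) * u t), by
      have : Continuous (fun t : Set.Icc (0:ℝ) β => ((t : ℝ), Real.exp (l * t) * u t)) := by
        fun_prop
      exact hf.comp_continuous this
        (fun t => ⟨⟨t.2.1, t.2.2.trans hβT⟩, Set.mem_univ _⟩)⟩
  let g : C(Set.Icc (0:ℝ) β, ℝ) → ℝ → ℝ := fun u x => G u (Set.projIcc 0 β hβ0 x)
  have hgc : ∀ u, Continuous (g u) := fun u => (G u).continuous.comp continuous_projIcc
  have hgC : ∀ u x, |g u x| ≤ ‖G u‖ := fun u x => (G u).norm_coe_le_norm _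
  have hgv : ∀ u (t : Set.Icc (0:ℝ) β), g u t = f t (Real.exp (l * t) * u t) := by
    intro u t
    simp only [g, Set.projIcc_val]
    rfl
  have hgl : ∀ u v (x : ℝ), x ∈ Set.Icc (0:ℝ) β →
      |g u x - g v x| ≤ L₂ * dist u v * Real.exp (l * x) := by
    intro u v x hx
    have e1 := hgv u ⟨x, hx⟩
    have e2 := hgv v ⟨x, hx⟩
    simp only at e1 e2
    rw [e1, e2]
    have hxT : x ∈ Set.Icc (0:ℝ) T := ⟨hx.1, hx.2.trans hβT⟩
    refine (hLip x hxT x hxT _ _).trans ?_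
    rw [sub_self, abs_zero, mul_zero, zero_add, ← mul_sub, abs_mul, abs_of_pos (Real.exp_pos _)]
    have := ContinuousMap.dist_apply_le_dist (f := u) (g := v) ⟨x, hx⟩
    rw [Real.dist_eq] at this
    calc _ ≤ L₂ * (Real.exp (l * x) * dist u v) := by gcongr
      _ = _ := by ring
  let I : C(Set.Icc (0:ℝ) β, ℝ) → ℝ → ℝ := fun u τ =>
    ∫ σ in (0:ℝ)..τ, (τ - σ) ^ (α - 1) * g u σ
  let Φ : C(Set.Icc (0:ℝ) β, ℝ) → C(Set.Icc (0:ℝ) β, ℝ) := fun u =>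
    ⟨fun t => Real.exp (-(l * t)) * (ω₀ + c * g u t + k * I u t), by
      have h1 : Continuous (fun t : Set.Icc (0:ℝ) β => I u t) := by
        have := (abc_cont α _ hα (g u) (hgc u) (hgC u)).comp
          (continuous_subtype_val (p := fun x => x ∈ Set.Icc (0:ℝ) β))
        refine this.congr fun t => ?_
        exact (abc_scale α t hα t.2.1 (g u)).symm
      have h2 : Continuous (fun t : Set.Icc (0:ℝ) β => g u t) :=
        (hgc u).comp continuous_subtype_val
      have h3 : Continuous (fun t : Set.Icc (0:ℝ) β => Real.exp (-(l * t))) := by fun_prop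
      exact h3.mul ((continuous_const.add (continuous_const.mul h2)).add (continuous_const.mul h1))⟩
  have hΦv : ∀ u t, Φ u t = Real.exp (-(l * t)) * (ω₀ + c * g u t + k * I u t) :=
    fun u t => rfl
  have hΦ : ContractingWith ⟨q, hq0⟩ Φ := by
    refine ⟨by exact_mod_cast hq, LipschitzWith.of_dist_le_mul fun u v => ?_⟩
    rw [ContinuousMap.dist_le (by positivity)]
    intro t
    rw [Real.dist_eq, hΦv, hΦv]
    have hI : I u t - I v t = ∫ σ in (0:ℝ)..t, ((t:ℝ) - σ) ^ (α - 1) * (g u σ - g v σ) := by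
      simp only [I]
      rw [← intervalIntegral.integral_sub (abc_kernel_int α t hα _ (hgc u))
        (abc_kernel_int α t hα _ (hgc v))]
      simp only [mul_sub]
    have hIb : |I u t - I v t| ≤
        L₂ * dist u v * Real.exp (l * t) * (l ^ (-α) * Real.Gamma α) := by
      rw [hI]
      exact abc_bound_exp α t _ l hα t.2.1 (by positivity) hl _
        (fun σ hσ => hgl u v σ ⟨hσ.1, hσ.2.trans t.2.2⟩)
    have hgb := hgl u v t t.2
    have e : Real.exp (-(l * t)) * (ω₀ + c * g u t + k * I u t) -
        Real.exp (-(l * t)) * (ω₀ + c * g v t + k * I v t) =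
        Real.exp (-(l * t)) * (c * (g u t - g v t) + k * (I u t - I v t)) := by ring
    rw [e, abs_mul, abs_of_pos (Real.exp_pos _)]
    have e3 : Real.exp (-(l * t)) * Real.exp (l * t) = 1 := by
      rw [← Real.exp_add]; simp
    calc _ ≤ Real.exp (-(l * t)) * (c * (L₂ * dist u v * Real.exp (l * t)) +
          k * (L₂ * dist u v * Real.exp (l * t) * (l ^ (-α) * Real.Gamma α))) := by
          gcongr
          refine (abs_add_le _ _).trans ?_
          rw [abs_mul, abs_mul, abs_of_pos hc0, abs_of_pos hk0]
          gcongr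
      _ = (Real.exp (-(l * t)) * Real.exp (l * t)) * (q * dist u v) := by rw [hqd]; ring
      _ = _ := by rw [e3, one_mul]; rfl
  -- invariant set
  let S : Set C(Set.Icc (0:ℝ) β, ℝ) := {u | ∀ t : Set.Icc (0:ℝ) β, |Real.exp (l * t) * u t - ω₀| ≤ b}
  have hS : IsClosed S := by
    have hSe : S = ⋂ t : Set.Icc (0:ℝ) β, {u | |Real.exp (l * t) * u t - ω₀| ≤ b} := by
      ext u; simp [S]
    rw [hSe]
    refine isClosed_iInter fun t => isClosed_le ?_ continuous_const
    have : Continuous (fun u : C(Set.Icc (0:ℝ) β, ℝ) => u t) := continuous_eval_const t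
    fun_prop
  have hexp : ∀ t : ℝ, Real.exp (l * t) * Real.exp (-(l * t)) = 1 := by
    intro t; rw [← Real.exp_add]; simp
  have hSm : ∀ u ∈ S, Φ u ∈ S := by
    intro u hu t
    have hgM : ∀ x ∈ Set.Icc (0:ℝ) β, |g u x| ≤ M := by
      intro x hx
      have e1 := hgv u ⟨x, hx⟩
      simp only at e1
      rw [e1]
      exact hM x ⟨hx.1, hx.2.trans hβT⟩ _ (hu ⟨x, hx⟩)
    rw [hΦv, ← mul_assoc, hexp, one_mul]
    have e : ω₀ + c * g u t + k * I u t - ω₀ = c * g u t + k * I u t := by ring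
    rw [e]
    have h1 := abc_bound_const α t M hα t.2.1 (g u)
      (fun σ hσ => hgM σ ⟨hσ.1, hσ.2.trans t.2.2⟩)
    have h2 := hgM t t.2
    refine (abs_add_le _ _).trans ?_
    rw [abs_mul, abs_mul, abs_of_pos hc0, abs_of_pos hk0]
    calc _ ≤ c * M + k * ((t:ℝ) ^ α / α * M) := by gcongr
      _ = (1 - α) / B * M + ((t:ℝ) ^ α * M) / (B * Real.Gamma α) := by
          rw [hc, hk]; field_simp
      _ ≤ (1 - α) / B * M + (Real.Gamma α * (b * B - M * (1 - α))) / (B * Real.Gamma α) := by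
          have := hβM t t.2
          gcongr
      _ = b := by field_simp; ring
  let u0 : C(Set.Icc (0:ℝ) β, ℝ) := ⟨fun t => Real.exp (-(l * t)) * ω₀, by fun_prop⟩
  have hu0 : u0 ∈ S := by
    intro t
    have : u0 t = Real.exp (-(l * t)) * ω₀ := rfl
    rw [this, ← mul_assoc, hexp]
    simpa using hb.le
  have hit : ∀ n, Φ^[n] u0 ∈ S := by
    intro n
    induction n with
    | zero => exact hu0
    | succ n ih => rw [Function.iterate_succ_apply']; exact hSm _ ih
  obtain ⟨u, hu⟩ : ∃ u, u = ContractingWith.fixedPoint Φ hΦ := ⟨_, rfl⟩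
  have huS : u ∈ S := by
    rw [hu]
    exact hS.mem_of_tendsto (hΦ.tendsto_iterate_fixedPoint u0) (Filter.Eventually.of_forall hit)
  have hfix : Φ u = u := by rw [hu]; exact hΦ.fixedPoint_isFixedPt
  let w : ℝ → ℝ := fun x => Real.exp (l * x) * u (Set.projIcc 0 β hβ0 x)
  have hwv : ∀ t : Set.Icc (0:ℝ) β, w t = Real.exp (l * t) * u t := by
    intro t; simp only [w, Set.projIcc_val]
  have hgw : ∀ x ∈ Set.Icc (0:ℝ) β, g u x = f x (w x) := by
    intro x hx
    have e1 := hgv u ⟨x, hx⟩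
    rw [← hwv] at e1
    exact e1
  have hsol : ∀ τ ∈ Set.Icc (0:ℝ) β, w τ = ω₀ + c * f τ (w τ) +
      k * ∫ σ in (0:ℝ)..τ, (τ - σ) ^ (α - 1) * f σ (w σ) := by
    intro τ hτ
    have h1 := hwv ⟨τ, hτ⟩
    rw [← hfix, hΦv, ← mul_assoc, hexp, one_mul] at h1
    simp only at h1
    rw [hgw τ hτ] at h1
    refine h1.trans ?_
    congr 2
    apply intervalIntegral.integral_congr
    intro σ hσ
    rw [Set.uIcc_of_le hτ.1] at hσ
    simp only
    rw [hgw σ ⟨hσ.1, hσ.2.trans hτ.2⟩]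
  refine ⟨w, ?_, ?_, ?_, hsol⟩
  · have : Continuous w := by
      have := u.continuous.comp (continuous_projIcc (h := hβ0))
      exact (by fun_prop : Continuous fun x : ℝ => Real.exp (l * x)).mul this
    exact this.continuousOn
  · have h0 := hsol 0 ⟨le_rfl, hβ0⟩
    rw [intervalIntegral.integral_same, mul_zero, add_zero] at h0
    have hT0 : (0:ℝ) ∈ Set.Icc (0:ℝ) T := ⟨le_rfl, hT.le⟩
    have h1 := hLip 0 hT0 0 hT0 (w 0) ω₀
    rw [hf0, sub_zero, sub_self, abs_zero, mul_zero, zero_add] at h1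
    have h2 : |w 0 - ω₀| = c * |f 0 (w 0)| := by
      have h5 : w 0 - ω₀ = c * f 0 (w 0) := by linarith
      calc |w 0 - ω₀| = |c * f 0 (w 0)| := congrArg _ h5
        _ = _ := by rw [abs_mul, abs_of_pos hc0]
    have h3 : |w 0 - ω₀| ≤ c * L₂ * |w 0 - ω₀| := by
      calc _ = c * |f 0 (w 0)| := h2
        _ ≤ c * (L₂ * |w 0 - ω₀|) := by gcongr
        _ = _ := by ring
    have h4 : |w 0 - ω₀| = 0 := by
      have := abs_nonneg (w 0 - ω₀)
      nlinarith
    linarith [abs_eq_zero.1 h4]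
  · intro τ hτ
    have := huS ⟨τ, hτ⟩
    rw [← hwv] at this
    exact this
end
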